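/- arXiv:1802.10385 — 2 statements merged into one kernel-verified Lean document; each statement's English description precedes it below -/
import Mathlib

section
/- Let R be a commutative Artinian ring and let B and A be Artin R-algebras such that B is representation-finite, and let φ : B → A be an R-algebra homomorphism preserving identities. If the relative finitistic dimension of φ is at most 1 (that is, every finitely generated left A-module X of finite projective dimension admits an (A,B)-exact sequence 0 → P₁ → P₀ → X → 0 with P₀ and P₁ (A,B)-projective), then the finitistic dimension of A is finite. -/
universe u

open TensorProduct

section Basic

variable (Λ : Type u) [Ring Λ]

/-- `ProjDimLE Λ n M` : the module `M` admits a projective resolution of length `≤ n`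
by finitely generated projective `Λ`-modules. -/
def ProjDimLE : ℕ → ModuleCat.{u} Λ → Prop
  | 0, M => Module.Projective Λ M
  | n + 1, M => ∃ (P : ModuleCat.{u} Λ) (g : P →ₗ[Λ] M),
      Module.Projective Λ P ∧ Module.Finite Λ P ∧ Function.Surjective g ∧
      ProjDimLE n (ModuleCat.of Λ (LinearMap.ker g))

/-- The finitistic dimension of `Λ` (computed on finitely generated modules) is finite. -/
def FinFinDim : Prop :=
  ∃ n : ℕ, ∀ M : ModuleCat.{u} Λ, Module.Finite Λ M →
    (∃ k : ℕ, ProjDimLE Λ k M) → ProjDimLE Λ n M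

/-- A module is indecomposable. -/
def ModIndec (M : ModuleCat.{u} Λ) : Prop :=
  Nontrivial M ∧ ∀ N₁ N₂ : Submodule Λ M, IsCompl N₁ N₂ → N₁ = ⊥ ∨ N₂ = ⊥

/-- A class of modules has only finitely many isomorphism classes of indecomposables. -/
def ClassRepFinite (C : ModuleCat.{u} Λ → Prop) : Prop :=
  ∃ (k : ℕ) (N : Fin k → ModuleCat.{u} Λ),
    ∀ M : ModuleCat.{u} Λ, C M → ModIndec Λ M → ∃ i, Nonempty (M ≃ₗ[Λ] N i)

/-- `Λ` is representation-finite. -/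
def RepFinite : Prop :=
  ClassRepFinite Λ (fun M => Module.Finite Λ M)

/-- `X` belongs to `add N`: it is a direct summand of a finite direct sum of copies of `N`. -/
def InAdd (N X : ModuleCat.{u} Λ) : Prop :=
  ∃ (k : ℕ) (i : X →ₗ[Λ] (Fin k → N)) (p : (Fin k → N) →ₗ[Λ] X),
    p.comp i = LinearMap.id

/-- A submodule is superfluous (small). -/
def IsSuperfluous {M : ModuleCat.{u} Λ} (N : Submodule Λ M) : Prop :=
  ∀ L : Submodule Λ M, L ⊔ N = ⊤ → L = ⊤

/-- `K` is (isomorphic to) the kernel of a projective cover of `M`, i.e. a first syzygy. -/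
def IsSyzygyOf (K M : ModuleCat.{u} Λ) : Prop :=
  ∃ (P : ModuleCat.{u} Λ) (g : P →ₗ[Λ] M), Module.Projective Λ P ∧ Module.Finite Λ P ∧
    Function.Surjective g ∧ IsSuperfluous Λ (LinearMap.ker g) ∧
    Nonempty (K ≃ₗ[Λ] LinearMap.ker g)

/-- `K` is an `n`-th syzygy of `M`. -/
def IsNthSyzygy : ℕ → ModuleCat.{u} Λ → ModuleCat.{u} Λ → Prop
  | 0, K, M => Nonempty (K ≃ₗ[Λ] M)
  | n + 1, K, M => ∃ K' : ModuleCat.{u} Λ, IsNthSyzygy n K' M ∧ IsSyzygyOf Λ K K'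

/-- A class `C` of modules is `m`-syzygy-finite. -/
def MSyzygyFiniteClass (m : ℕ) (C : ModuleCat.{u} Λ → Prop) : Prop :=
  ∃ N : ModuleCat.{u} Λ, Module.Finite Λ N ∧
    ∀ X, C X → ∀ K, IsNthSyzygy Λ m K X → InAdd Λ N K

/-- A class `C` of modules is syzygy-finite. -/
def SyzygyFiniteClass (C : ModuleCat.{u} Λ → Prop) : Prop :=
  ∃ m : ℕ, MSyzygyFiniteClass Λ m C

/-- `Λ` is 1-syzygy-finite. -/
def OneSyzygyFinite : Prop :=
  MSyzygyFiniteClass Λ 1 (fun X => Module.Finite Λ X)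

/-- `Λ` is syzygy-finite. -/
def AlgSyzygyFinite : Prop :=
  SyzygyFiniteClass Λ (fun X => Module.Finite Λ X)

/-- The Jacobson radical of `Λ` (intersection of the maximal left ideals). -/
def jacobsonRad : Ideal Λ := sInf {I : Ideal Λ | I.IsMaximal}

end Basic

/-- The Jacobson radical of a subalgebra, as a subset of the ambient algebra. -/
def radSet {R A : Type u} [CommRing R] [Ring A] [Algebra R A] (S : Subalgebra R A) : Set A :=
  Subtype.val '' ((jacobsonRad ↥S : Ideal ↥S) : Set ↥S)

section Rel

variable {R : Type u} [CommRing R] {B A : Type u} [Ring B] [Ring A]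
  [Algebra R B] [Algebra R A] (φ : B →ₐ[R] A)

/-- The tensor product `A ⊗_B X` of the (A,B)-bimodule `A` with a left `A`-module `X`
(viewed as a `B`-module via `φ`), realized as a quotient of `A ⊗_R X`. -/
noncomputable def relTensor (X : ModuleCat.{u} A) : ModuleCat.{u} A :=
  letI : Module R X := Module.compHom X (algebraMap R A)
  ModuleCat.of A ((A ⊗[R] X) ⧸ Submodule.span A
    {z : A ⊗[R] X | ∃ (a : A) (b : B) (x : X),
      z = (a * φ b) ⊗ₜ[R] x - a ⊗ₜ[R] (φ b • x)})

/-- `X` is `(A,B)`-projective: a direct summand of `A ⊗_B X`. -/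
noncomputable def RelProjective (X : ModuleCat.{u} A) : Prop :=
  ∃ (i : X →ₗ[A] relTensor φ X) (p : relTensor φ X →ₗ[A] X), p.comp i = LinearMap.id

/-- The map `g` admits a `B`-linear map `h` with `g ∘ h ∘ g = g`
(this encodes `(A,B)`-exactness of the corresponding short exact sequence). -/
def RelSplitB {P X : ModuleCat.{u} A} (g : P →ₗ[A] X) : Prop :=
  ∃ h : X →+ P, (∀ (b : B) (x : X), h (φ b • x) = φ b • h x) ∧
    ∀ p : P, g (h (g p)) = g p

/-- `RelProjDimLE φ n X` : `X` has an `(A,B)`-exact resolution of length `≤ n` by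
finitely generated `(A,B)`-projective modules, i.e. relative projective dimension `≤ n`. -/
noncomputable def RelProjDimLE : ℕ → ModuleCat.{u} A → Prop
  | 0, X => RelProjective φ X
  | n + 1, X => ∃ (P : ModuleCat.{u} A) (g : P →ₗ[A] X),
      RelProjective φ P ∧ Module.Finite A P ∧ Function.Surjective g ∧ RelSplitB φ g ∧
      RelProjDimLE n (ModuleCat.of A (LinearMap.ker g))

/-- Restriction of scalars along `φ` of an `A`-module, as an object of `ModuleCat B`. -/
def resMod (X : ModuleCat.{u} A) : ModuleCat.{u} B :=
  @ModuleCat.of B _ X _ (Module.compHom X φ.toRingHom)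

/-- The right `B`-module structure on `A` induced by `φ`. -/
def rightModB : Module Bᵐᵒᵖ A :=
  Module.compHom A (RingHom.op φ.toRingHom)

end Rel

/-!
An `A`-module `X` of finite projective dimension is the cokernel of some `f : K ⟶ P` between
`(A,B)`-projective modules, and these all lie in `add (A ⊗_B N)` for a single `B`-module `N`,
because `B` is representation-finite. The dimension of `X` is read off from the degrees in which
`f` induces isomorphisms on `Ext`, so it suffices to bound these degrees uniformly for all such `f`.

Syzygies shift the degrees by one. For modules `K`, `M` in `add N'`, described by multiplicities of
the indecomposable summands of `N'`, stable isomorphism of the `m`-th syzygies is therefore a chain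
of congruences on `ℕ^ι` increasing with `m`. As in the argument of Igusa and Todorov, this chain is
stationary at some `n` up to cancellation, so that the `n`-th syzygies of `K` and `M` become stably
isomorphic after adding the same module to both. There `f` turns into an endomorphism, and by
Fitting's lemma the degree in question is the projective dimension of one of its direct summands,
which is one of finitely many possible values.
-/

section ExtIsomorphisms

open CategoryTheory Limits Abelian

universe w v' u'

variable {C : Type u'} [Category.{v'} C] [Abelian C] [HasExt.{w} C]

/-- `f : X ⟶ Y` is an *Ext-isomorphism* in degrees `≥ n` if it induces bijections
`Ext Y Z k → Ext X Z k` for all `Z` and all `k ≥ n`. For `n = 1` these are the morphisms which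
become invertible modulo projective objects. -/
def ExtIso (n : ℕ) {X Y : C} (f : X ⟶ Y) : Prop :=
  ∀ (Z : C) (k : ℕ), n ≤ k → Function.Bijective ((Ext.mk₀ f).precomp Z (zero_add k))

namespace ExtIso

variable {n : ℕ} {X Y Z W X' Y' : C} {f : X ⟶ Y} {g : Y ⟶ Z}

lemma precomp_mk₀_comp (f : X ⟶ Y) (g : Y ⟶ Z) (T : C) (k : ℕ) :
    ⇑((Ext.mk₀ (f ≫ g)).precomp T (zero_add k)) =
      (Ext.mk₀ f).precomp T (zero_add k) ∘ (Ext.mk₀ g).precomp T (zero_add k) := by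
  ext e
  simp

lemma mono {m : ℕ} (h : ExtIso n f) (hnm : n ≤ m) : ExtIso m f :=
  fun Z k hk => h Z k (hnm.trans hk)

lemma precomp_iff (hf : ExtIso n f) : ExtIso n (f ≫ g) ↔ ExtIso n g :=
  forall₃_congr fun T k hk => by
    rw [precomp_mk₀_comp, Function.Bijective.of_comp_iff' (hf T k hk)]

lemma postcomp_iff (hg : ExtIso n g) : ExtIso n (f ≫ g) ↔ ExtIso n f :=
  forall₃_congr fun T k hk => by
    rw [precomp_mk₀_comp, Function.Bijective.of_comp_iff _ (hg T k hk)]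

lemma comp (hf : ExtIso n f) (hg : ExtIso n g) : ExtIso n (f ≫ g) :=
  hf.precomp_iff.2 hg

lemma of_comp_of_comp {h : Z ⟶ W} (hfg : ExtIso n (f ≫ g)) (hgh : ExtIso n (g ≫ h)) :
    ExtIso n g := fun T k hk => by
  have hi := (hfg T k hk).1
  have hs := (hgh T k hk).2
  rw [precomp_mk₀_comp] at hi hs
  exact ⟨hi.of_comp, hs.of_comp⟩

lemma of_isIso (n : ℕ) (f : X ⟶ Y) [IsIso f] : ExtIso n f := by
  have h (X : C) : ExtIso n (𝟙 X) := fun T k _ => by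
    convert Function.bijective_id
    ext e
    simp
  exact of_comp_of_comp (f := inv f) (h := inv f) (by simpa using h Y) (by simpa using h X)

lemma biprodMap_iff {f' : X' ⟶ Y'} :
    ExtIso n (biprod.map f f') ↔ ExtIso n f ∧ ExtIso n f' := by
  have h (T : C) (k : ℕ) : Function.Bijective ((Ext.mk₀ (biprod.map f f')).precomp T (zero_add k)) ↔
      Function.Bijective ((Ext.mk₀ f).precomp T (zero_add k)) ∧
        Function.Bijective ((Ext.mk₀ f').precomp T (zero_add k)) := by
    rw [← Prod.map_bijective, ← Ext.biprodAddEquiv.toEquiv.comp_bijective,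
      ← Ext.biprodAddEquiv.toEquiv.bijective_comp]
    congr! 1
    ext e <;> simp
  simp only [ExtIso, h, forall_and]

end ExtIso

variable {S : ShortComplex C}

lemma ExtIso.of_hasProjectiveDimensionLT (hS : S.ShortExact) {n : ℕ}
    [HasProjectiveDimensionLT S.X₃ n] : ExtIso n S.f := fun Z k hk => by
  refine ⟨(injective_iff_map_eq_zero _).2 fun x hx => ?_, fun x => ?_⟩
  · obtain ⟨y, rfl⟩ := Ext.contravariant_sequence_exact₂ hS Z x hx
    rw [y.eq_zero_of_hasProjectiveDimensionLT n hk, Ext.comp_zero]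
  · exact Ext.contravariant_sequence_exact₁ hS Z x (add_comm 1 k)
      (Ext.eq_zero_of_hasProjectiveDimensionLT _ n (by lia))

lemma ExtIso.hasProjectiveDimensionLT (hS : S.ShortExact) {n : ℕ} (h : ExtIso n S.f) :
    HasProjectiveDimensionLT S.X₃ (n + 1) := by
  rw [hasProjectiveDimensionLT_iff]
  rintro (_ | k) hk Z e
  · lia
  · have hg : (Ext.mk₀ S.g).comp e (zero_add (k + 1)) = 0 := by
      refine (h Z (k + 1) (by lia)).1 ?_
      simp [S.zero]
    obtain ⟨x₁, rfl⟩ := Ext.contravariant_sequence_exact₃ hS Z e hg (add_comm 1 k)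
    obtain ⟨x₂, rfl⟩ := (h Z k (by lia)).2 x₁
    exact hS.extClass_comp_assoc x₂

/-- The pullback of the extension `0 ⟶ kernel f ⟶ X ⟶ Y ⟶ 0` along `f` is split, so the extension
itself is split as soon as `f` induces an injection on `Ext¹`. -/
lemma ExtIso.isSplitEpi {X Y : C} {f : X ⟶ Y} [Epi f] (h : ExtIso 1 f) : IsSplitEpi f := by
  let S : ShortComplex C := ShortComplex.mk (kernel.ι f) f (by simp)
  have hS : S.ShortExact := { exact := S.exact_of_f_is_kernel (kernelIsKernel f) }
  have hcls : hS.extClass = 0 := (h _ 1 le_rfl).1 (hS.comp_extClass.trans (map_zero _).symm)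
  obtain ⟨x, hx⟩ := Ext.covariant_sequence_exact₃ Y hS (Ext.mk₀ (𝟙 Y)) (zero_add 1)
    (by rw [hcls, Ext.comp_zero])
  obtain ⟨s, rfl⟩ := (Ext.mk₀_bijective _ _).2 x
  refine ⟨⟨s, (Ext.mk₀_bijective Y Y).1 ?_⟩⟩
  rw [← hx, Ext.mk₀_comp_mk₀]

lemma ExtIso.biprod_inl (X P : C) [Projective P] : ExtIso 1 (biprod.inl : X ⟶ X ⊞ P) :=
  have : HasProjectiveDimensionLT (ShortComplex.mk (biprod.inl : X ⟶ X ⊞ P) biprod.snd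
    (by simp)).X₃ 1 := inferInstanceAs (HasProjectiveDimensionLT P 1)
  ExtIso.of_hasProjectiveDimensionLT
    (ShortComplex.Splitting.ofHasBinaryBiproduct X P).shortExact

lemma ExtIso.exists_reverse [EnoughProjectives C] {X Y : C} {f : X ⟶ Y} (h : ExtIso 1 f) :
    ∃ g : Y ⟶ X, ExtIso 1 g := by
  let q : X ⊞ Projective.over Y ⟶ Y := biprod.desc f (Projective.π Y)
  have : Epi q := epi_of_epi_fac (f := biprod.inr) (h := Projective.π Y) (by simp [q])
  have hinl := ExtIso.biprod_inl X (Projective.over Y)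
  have hq : ExtIso 1 q := hinl.precomp_iff.1 (by simpa [q] using h)
  have hfst : ExtIso 1 (biprod.fst : X ⊞ Projective.over Y ⟶ X) :=
    hinl.precomp_iff.1 (by simpa using of_isIso 1 (𝟙 X))
  have := hq.isSplitEpi
  have hs : ExtIso 1 (section_ q) := hq.postcomp_iff.1 (by simpa using of_isIso 1 (𝟙 Y))
  exact ⟨section_ q ≫ biprod.fst, hs.comp hfst⟩

/-- `K` is a (not necessarily minimal) syzygy of `M`: the kernel of an epimorphism from a projective
object onto `M`. -/
def IsSyzygy (K M : C) : Prop :=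
  ∃ (P : C) (i : K ⟶ P) (p : P ⟶ M) (w : i ≫ p = 0),
    Projective P ∧ (ShortComplex.mk i p w).ShortExact

lemma bijective_precomp_extClass (hS : S.ShortExact) [Projective S.X₂] (Z : C) (k : ℕ) :
    Function.Bijective (hS.extClass.precomp Z (add_comm 1 (k + 1))) := by
  refine ⟨(injective_iff_map_eq_zero _).2 fun x hx => ?_, fun x => ?_⟩
  · obtain ⟨y, rfl⟩ := Ext.contravariant_sequence_exact₁ hS Z x (add_comm 1 (k + 1)) hx
    rw [y.eq_zero_of_projective, Ext.comp_zero]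
  · exact Ext.contravariant_sequence_exact₃ hS Z x (Ext.eq_zero_of_projective _)
      (add_comm 1 (k + 1))

lemma IsSyzygy.exists_lift {K K' M M' : C} (hK : IsSyzygy K' K) (hM : IsSyzygy M' M)
    (f : K ⟶ M) : ∃ f' : K' ⟶ M', ∀ n, ExtIso (n + 1) f' ↔ ExtIso (n + 2) f := by
  obtain ⟨P, i, p, w, hP, hS⟩ := hK
  obtain ⟨Q, j, q, w', hQ, hT⟩ := hM
  have := hS.epi_g
  have := hT.epi_g
  have := hT.mono_f
  let F : P ⟶ Q := Projective.factorThru (p ≫ f) q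
  have hF : F ≫ q = p ≫ f := Projective.factorThru_comp _ _
  have hiF : (i ≫ F) ≫ q = 0 := by rw [Category.assoc, hF, reassoc_of% w, zero_comp]
  let f' : K' ⟶ M' := hT.exact.lift (i ≫ F) hiF
  have hf' : f' ≫ j = i ≫ F := hT.exact.lift_f _ _
  have hnat := ShortComplex.ShortExact.extClass_naturality hS hT
    { τ₁ := f', τ₂ := F, τ₃ := f, comm₁₂ := hf', comm₂₃ := hF }
  refine ⟨f', fun n => ?_⟩
  have key (Z : C) (k : ℕ) : Function.Bijective ((Ext.mk₀ f').precomp Z (zero_add (k + 1))) ↔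
      Function.Bijective ((Ext.mk₀ f).precomp Z (zero_add (k + 2))) := by
    rw [← Function.Bijective.of_comp_iff' (bijective_precomp_extClass hS Z k),
      ← Function.Bijective.of_comp_iff _ (bijective_precomp_extClass hT Z k)]
    congr! 1
    ext x
    have := congrArg (fun e => e.comp x (add_comm 1 (k + 1))) hnat
    rwa [Ext.comp_assoc_of_second_deg_zero, Ext.comp_assoc (a₂₃ := k + 2) _ _ _ (zero_add 1)
      (add_comm 1 (k + 1)) (by lia)] at this
  refine ⟨fun h Z k hk => ?_, fun h Z k hk => ?_⟩
  · obtain ⟨l, rfl⟩ : ∃ l, k = l + 2 := ⟨k - 2, by lia⟩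
    exact (key Z l).1 (h Z (l + 1) (by lia))
  · obtain ⟨l, rfl⟩ : ∃ l, k = l + 1 := ⟨k - 1, by lia⟩
    exact (key Z l).2 (h Z (l + 2) (by lia))

/-- The hypotheses encode a Fitting decomposition `U = Y ⊕ Y'`: the endomorphism `v` is zero on `Y`
and bijective on `Y'`. -/
lemma ExtIso.iff_of_fitting {U Y : C} {v : U ⟶ U} {i : Y ⟶ U} {p : U ⟶ Y}
    (hip : i ≫ p = 𝟙 Y) (hiv : i ≫ v = 0) [IsIso (v + p ≫ i)] (n : ℕ) :
    ExtIso n v ↔ HasProjectiveDimensionLT Y n := by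
  rw [hasProjectiveDimensionLT_iff]
  refine ⟨fun h k hk Z e => ?_, fun h Z k hk => ?_⟩
  · obtain ⟨x, hx⟩ := (h Z k hk).2 ((Ext.mk₀ p).comp e (zero_add k))
    have := congrArg ((Ext.mk₀ i).precomp Z (zero_add k)) hx
    simpa [hip, hiv] using this.symm
  · convert of_isIso n (v + p ≫ i) Z k hk using 1
    ext x
    have hpi : (Ext.mk₀ (p ≫ i)).comp x (zero_add k) = 0 := by
      rw [← Ext.mk₀_comp_mk₀_assoc, h k hk ((Ext.mk₀ i).comp x (zero_add k)), Ext.comp_zero]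
    simp [Ext.mk₀_add, hpi]

lemma ExtIso.pow_succ_iff {U : C} {u : End U} {n m : ℕ} :
    ExtIso n (u ^ (m + 1)) ↔ ExtIso n u := by
  refine ⟨fun h => of_comp_of_comp (f := u ^ m) (h := u ^ m) ?_ ?_, fun h => ?_⟩
  · rwa [← End.mul_def, ← pow_succ']
  · rwa [← End.mul_def, ← pow_succ]
  · induction m with
    | zero => simpa using h
    | succ m ih => exact pow_succ u (m + 1) ▸ h.comp ih

end ExtIsomorphisms

section KrullSchmidt

variable {A : Type u} [Ring A] {N X Y : ModuleCat.{u} A}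

lemma InAdd.of_sum {κ : Type*} [Fintype κ] (i : κ → X →ₗ[A] N) (p : κ → N →ₗ[A] X)
    (h : ∀ x, ∑ t, p t (i t x) = x) : InAdd A N X := by
  let e := Fintype.equivFin κ
  refine ⟨Fintype.card κ, LinearMap.pi fun t => i (e.symm t),
    ∑ t, p (e.symm t) ∘ₗ LinearMap.proj t, LinearMap.ext fun x => ?_⟩
  simpa using (e.symm.sum_comp fun t => p t (i t x)).trans (h x)

lemma InAdd.exists_sum (h : InAdd A N X) : ∃ (k : ℕ) (i : Fin k → X →ₗ[A] N)
    (p : Fin k → N →ₗ[A] X), ∀ x, ∑ t, p t (i t x) = x := by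
  obtain ⟨k, i, p, hip⟩ := h
  refine ⟨k, fun t => LinearMap.proj t ∘ₗ i, fun t => p ∘ₗ LinearMap.single A (fun _ => N) t,
    fun x => ?_⟩
  calc ∑ t, p (Pi.single t (i x t)) = p (i x) := by rw [← map_sum, Finset.univ_sum_single]
    _ = x := LinearMap.congr_fun hip x

lemma InAdd.of_retract (i : X →ₗ[A] N) (p : N →ₗ[A] X) (h : p ∘ₗ i = LinearMap.id) :
    InAdd A N X :=
  .of_sum (fun _ : Unit => i) (fun _ => p) fun x => by simpa using LinearMap.congr_fun h x

lemma InAdd.of_equiv (e : X ≃ₗ[A] N) : InAdd A N X :=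
  .of_retract e.toLinearMap e.symm.toLinearMap (by ext; simp)

lemma InAdd.trans (hX : InAdd A N X) (hY : InAdd A X Y) : InAdd A N Y := by
  obtain ⟨k, i, p, hX⟩ := hX.exists_sum
  obtain ⟨l, j, q, hY⟩ := hY.exists_sum
  refine .of_sum (fun t : Fin l × Fin k => i t.2 ∘ₗ j t.1) (fun t => q t.1 ∘ₗ p t.2) fun y => ?_
  simp only [Fintype.sum_prod_type, LinearMap.comp_apply, ← map_sum, hX, hY]

lemma InAdd.pi {κ : Type} [Finite κ] {M : κ → ModuleCat.{u} A} (h : ∀ t, InAdd A N (M t)) :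
    InAdd A N (ModuleCat.of A (∀ t, M t)) := by
  classical
  have := Fintype.ofFinite κ
  choose k i p hip using fun t => (h t).exists_sum
  refine .of_sum (fun t : Σ t, Fin (k t) => i t.1 t.2 ∘ₗ LinearMap.proj t.1)
    (fun t => LinearMap.single A (fun t => M t) t.1 ∘ₗ p t.1 t.2) fun x => ?_
  calc ∑ t : Σ t, Fin (k t), Pi.single t.1 (p t.1 t.2 (i t.1 t.2 (x t.1)))
      = ∑ t, Pi.single t (∑ s, p t s (i t s (x t))) := by
        simp only [Fintype.sum_sigma, ← LinearMap.single_apply (R := A), map_sum]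
    _ = x := by simp only [hip, Finset.univ_sum_single]

lemma InAdd.of_pi {κ : Type} (M : κ → ModuleCat.{u} A) (t : κ) :
    InAdd A (ModuleCat.of A (∀ t, M t)) (M t) := by
  classical
  exact .of_retract (LinearMap.single A (fun t => M t) t) (LinearMap.proj t)
    (LinearMap.proj_comp_single_same A _ t)

lemma InAdd.isNoetherian [IsNoetherian A N] (h : InAdd A N X) : IsNoetherian A X := by
  obtain ⟨k, i, p, hip⟩ := h
  exact isNoetherian_of_injective i (LinearMap.injective_of_comp_eq_id _ _ hip)

lemma InAdd.isArtinian [IsArtinian A N] (h : InAdd A N X) : IsArtinian A X := by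
  obtain ⟨k, i, p, hip⟩ := h
  exact isArtinian_of_injective i (LinearMap.injective_of_comp_eq_id _ _ hip)

/-- A finite direct sum decomposition can be refined until all summands are indecomposable, since
every proper splitting decreases the length. -/
theorem exists_equiv_pi_modIndec (M : ModuleCat.{u} A) [IsNoetherian A M] [IsArtinian A M] :
    ∃ (κ : Type) (_ : Finite κ) (I : κ → ModuleCat.{u} A),
      (∀ t, ModIndec A (I t)) ∧ Nonempty (M ≃ₗ[A] ∀ t, I t) := by
  induction hl : Module.length A M using WellFoundedLT.induction generalizing M with
  | ind l ih =>
  by_cases hM : ModIndec A M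
  · exact ⟨Unit, inferInstance, fun _ => M, fun _ => hM, ⟨(LinearEquiv.funUnique Unit A M).symm⟩⟩
  obtain hM' | hM' := subsingleton_or_nontrivial M
  · exact ⟨Empty, inferInstance, fun t => t.elim, fun t => t.elim, ⟨0⟩⟩
  obtain ⟨N₁, N₂, hN, h₁, h₂⟩ : ∃ N₁ N₂ : Submodule A M, IsCompl N₁ N₂ ∧ N₁ ≠ ⊥ ∧ N₂ ≠ ⊥ := by
    simpa [ModIndec, hM'] using hM
  have lt {N : Submodule A M} (h : N ≠ ⊤) : Module.length A N < l := hl ▸ Submodule.length_lt h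
  have h₁' : N₁ ≠ ⊤ := by rintro rfl; exact h₂ (by simpa using hN.disjoint)
  have h₂' : N₂ ≠ ⊤ := by rintro rfl; exact h₁ (by simpa using hN.disjoint)
  obtain ⟨κ₁, _, I₁, hI₁, ⟨e₁⟩⟩ := ih _ (lt h₁') (ModuleCat.of A N₁) rfl
  obtain ⟨κ₂, _, I₂, hI₂, ⟨e₂⟩⟩ := ih _ (lt h₂') (ModuleCat.of A N₂) rfl
  refine ⟨κ₁ ⊕ κ₂, inferInstance, Sum.elim I₁ I₂, by simp [hI₁, hI₂], ⟨?_⟩⟩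
  exact (Submodule.prodEquivOfIsCompl N₁ N₂ hN).symm ≪≫ₗ e₁.prodCongr e₂ ≪≫ₗ
    (LinearEquiv.sumPiEquivProdPi A κ₁ κ₂
      fun t => ((Sum.elim I₁ I₂ t : ModuleCat.{u} A) : Type u)).symm

lemma ModIndec.isLocalRing_end {M : ModuleCat.{u} A} [IsNoetherian A M] [IsArtinian A M]
    (h : ModIndec A M) : IsLocalRing (Module.End A M) := by
  have := h.1
  refine ⟨fun {a b} hab => ?_⟩
  obtain ⟨n, hc, hn⟩ :=
    (a.eventually_isCompl_ker_pow_range_pow.and (Filter.eventually_ne_atTop 0)).exists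
  rcases h.2 _ _ hc with hk | hr
  · left
    have hinj : Function.Injective (a ^ n) := LinearMap.ker_eq_bot.1 hk
    exact (isUnit_pow_iff hn).1 <| (Module.End.isUnit_iff _).2 <|
      IsArtinian.bijective_of_injective_endomorphism _ hinj
  · right
    have hnil : IsNilpotent a := ⟨n, LinearMap.range_eq_bot.1 hr⟩
    rw [eq_sub_of_add_eq' hab]
    exact hnil.isUnit_one_sub

lemma ModIndec.eq_zero_or_eq_one {M : ModuleCat.{u} A} (h : ModIndec A M) {e : Module.End A M}
    (he : IsIdempotentElem e) : e = 0 ∨ e = 1 := by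
  rcases h.2 _ _ (LinearMap.IsIdempotentElem.isCompl he) with hr | hk
  · exact Or.inl (LinearMap.range_eq_bot.1 hr)
  · refine Or.inr (LinearMap.ext fun x => LinearMap.ker_eq_bot.1 hk ?_)
    exact LinearMap.congr_fun he x

lemma ModIndec.nonempty_equiv (hX : Nontrivial X) (hN : ModIndec A N) (i : X →ₗ[A] N)
    (p : N →ₗ[A] X) (h : p ∘ₗ i = LinearMap.id) : Nonempty (X ≃ₗ[A] N) := by
  have he : IsIdempotentElem (i ∘ₗ p : Module.End A N) := by
    change i ∘ₗ (p ∘ₗ i) ∘ₗ p = _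
    rw [h, LinearMap.id_comp]
  rcases hN.eq_zero_or_eq_one he with h0 | h1
  · obtain ⟨x, hx⟩ := exists_ne (0 : X)
    have hpi (x : X) : p (i x) = x := LinearMap.congr_fun h x
    refine absurd ?_ hx
    calc x = p (i (p (i x))) := by simp only [hpi]
      _ = p 0 := congrArg p (LinearMap.congr_fun h0 (i x))
      _ = 0 := map_zero p
  · exact ⟨LinearEquiv.ofLinearMap i p h1 h⟩

lemma exists_retract_of_sum [IsLocalRing (Module.End A X)] {κ : Type*} [Fintype κ]
    {M : κ → ModuleCat.{u} A} (i : ∀ t, X →ₗ[A] M t) (p : ∀ t, M t →ₗ[A] X)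
    (h : ∀ x, ∑ t, p t (i t x) = x) :
    ∃ (t : κ) (i' : X →ₗ[A] M t) (p' : M t →ₗ[A] X), p' ∘ₗ i' = LinearMap.id := by
  have hsum : ∑ t, (p t ∘ₗ i t : Module.End A X) = 1 := by
    ext x
    simpa using h x
  obtain ⟨t, -, v, hv⟩ := IsLocalRing.exists_of_isUnit_sum (hsum ▸ isUnit_one)
  exact ⟨t, i t, v⁻¹.1 ∘ₗ p t, (congrArg (v⁻¹.1 * ·) hv.symm).trans v.inv_mul⟩

lemma ModIndec.exists_equiv_of_inAdd_pi [IsNoetherian A X] [IsArtinian A X] {ι : Type} [Finite ι]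
    {L : ι → ModuleCat.{u} A} (hX : ModIndec A X) (hL : ∀ j, ModIndec A (L j))
    (h : InAdd A (ModuleCat.of A (∀ j, L j)) X) : ∃ j, Nonempty (X ≃ₗ[A] L j) := by
  classical
  have := Fintype.ofFinite ι
  have := hX.isLocalRing_end
  obtain ⟨k, i, p, hip⟩ := h.exists_sum
  obtain ⟨⟨t, j⟩, i', p', h'⟩ := exists_retract_of_sum (M := fun t : Fin k × ι => L t.2)
    (fun t => LinearMap.proj t.2 ∘ₗ i t.1)
    (fun t => p t.1 ∘ₗ LinearMap.single A (fun j => L j) t.2) fun x => by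
      calc ∑ t : Fin k × ι, p t.1 (Pi.single t.2 (i t.1 x t.2))
          = ∑ t, p t (∑ j, Pi.single j (i t x j)) := by simp only [Fintype.sum_prod_type, map_sum]
        _ = x := by simp only [Finset.univ_sum_single, hip]
  exact ⟨j, (hL j).nonempty_equiv hX.1 i' p' h'⟩

theorem exists_finite_family_equiv_pi (N : ModuleCat.{u} A) [IsNoetherian A N] [IsArtinian A N] :
    ∃ (ι : Type) (_ : Finite ι) (L : ι → ModuleCat.{u} A), (∀ j, InAdd A N (L j)) ∧
      ∀ M : ModuleCat.{u} A, InAdd A N M →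
        ∃ (κ : Type) (_ : Finite κ) (s : κ → ι), Nonempty (M ≃ₗ[A] ∀ t, L (s t)) := by
  obtain ⟨ι, hι, L, hL, ⟨eN⟩⟩ := exists_equiv_pi_modIndec N
  refine ⟨ι, hι, L, fun j => .trans (.of_equiv (X := .of A (∀ j, L j)) eN.symm) (.of_pi L j),
    fun M hM => ?_⟩
  have := hM.isNoetherian
  have := hM.isArtinian
  obtain ⟨κ, hκ, I, hI, ⟨eM⟩⟩ := exists_equiv_pi_modIndec M
  have hs (t : κ) : ∃ j, Nonempty (I t ≃ₗ[A] L j) := by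
    have hMI : InAdd A M (I t) := .trans (.of_equiv (X := .of A (∀ t, I t)) eM.symm) (.of_pi I t)
    have := hMI.isNoetherian
    have := hMI.isArtinian
    exact (hI t).exists_equiv_of_inAdd_pi hL (.trans (.of_equiv eN) (hM.trans hMI))
  choose s hs using hs
  exact ⟨κ, hκ, s, ⟨eM ≪≫ₗ LinearEquiv.piCongrRight fun t => (hs t).some⟩⟩

end KrullSchmidt

section ProjectiveDimension

open CategoryTheory Limits Abelian

lemma hasProjectiveDimensionLT_of_sum {C : Type*} [Category* C] [Abelian C] {X : C} {κ : Type*}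
    [Fintype κ] {Y : κ → C} (p : ∀ t, X ⟶ Y t) (i : ∀ t, Y t ⟶ X) (h : ∑ t, p t ≫ i t = 𝟙 X)
    (n : ℕ) [∀ t, HasProjectiveDimensionLT (Y t) n] : HasProjectiveDimensionLT X n := by
  let _ := HasExt.standard C
  rw [hasProjectiveDimensionLT_iff]
  intro k hk Z e
  have hterm (t : κ) : (Ext.mk₀ (p t ≫ i t)).comp e (zero_add k) = 0 := by
    rw [← Ext.mk₀_comp_mk₀_assoc,
      ((Ext.mk₀ (i t)).comp e (zero_add k)).eq_zero_of_hasProjectiveDimensionLT n hk, Ext.comp_zero]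
  calc e = (Ext.mk₀ (∑ t, p t ≫ i t)).comp e (zero_add k) := by rw [h, Ext.mk₀_id_comp]
    _ = 0 := by rw [Ext.mk₀_sum, Ext.sum_comp, Finset.sum_eq_zero fun t _ => hterm t]

variable {A : Type u} [Ring A]

lemma hasProjectiveDimensionLT_pi {κ : Type} [Finite κ] (M : κ → ModuleCat.{u} A) (n : ℕ)
    [∀ t, HasProjectiveDimensionLT (M t) n] :
    HasProjectiveDimensionLT (ModuleCat.of A (∀ t, M t)) n := by
  classical
  have := Fintype.ofFinite κ
  refine hasProjectiveDimensionLT_of_sum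
    (fun t => ModuleCat.ofHom (LinearMap.proj (φ := fun t => M t) t))
    (fun t => ModuleCat.ofHom (LinearMap.single A (fun t => M t) t)) ?_ n
  refine ModuleCat.hom_ext (LinearMap.ext fun x => ?_)
  simpa [ModuleCat.hom_sum] using Finset.univ_sum_single x

theorem exists_hasProjectiveDimensionLT_of_inAdd (N : ModuleCat.{u} A) [IsNoetherian A N]
    [IsArtinian A N] : ∃ D, ∀ (X : ModuleCat.{u} A) (k : ℕ), InAdd A N X →
      HasProjectiveDimensionLT X k → HasProjectiveDimensionLT X D := by
  classical
  obtain ⟨ι, _, L, -, hL⟩ := exists_finite_family_equiv_pi N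
  have := Fintype.ofFinite ι
  choose! d hd using fun (j : ι) (h : ∃ k, HasProjectiveDimensionLT (L j) k) => h
  refine ⟨Finset.univ.sup d, fun X k hX _ => ?_⟩
  obtain ⟨κ, _, s, ⟨e⟩⟩ := hL X hX
  have (t : κ) : HasProjectiveDimensionLT (L (s t)) (Finset.univ.sup d) := by
    have hret : Retract (L (s t)) X :=
      { i := ModuleCat.ofHom (e.symm.toLinearMap ∘ₗ LinearMap.single A (fun t => L (s t)) t)
        r := ModuleCat.ofHom (LinearMap.proj t ∘ₗ e.toLinearMap)
        retract := by ext; simp }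
    have := hd (s t) ⟨k, hret.hasProjectiveDimensionLT k⟩
    exact hasProjectiveDimensionLT_of_ge _ _ _ (Finset.le_sup (Finset.mem_univ (s t)))
  have := hasProjectiveDimensionLT_pi (fun t => L (s t)) (Finset.univ.sup d)
  exact hasProjectiveDimensionLT_of_iso e.toModuleIso.symm _

lemma exists_pow_fitting {U : Type*} [AddCommGroup U] [Module A U] [IsNoetherian A U]
    [IsArtinian A U] (u : Module.End A U) : ∃ (m : ℕ) (Y : Submodule A U) (p : U →ₗ[A] Y),
      p ∘ₗ Y.subtype = LinearMap.id ∧ (u ^ (m + 1)) ∘ₗ Y.subtype = 0 ∧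
        Function.Bijective (u ^ (m + 1) + Y.subtype ∘ₗ p) := by
  obtain ⟨m, hm⟩ := Filter.eventually_atTop.1 u.eventually_isCompl_ker_pow_range_pow
  have hc := hm (m + 1) m.le_succ
  refine ⟨m, _, Submodule.projectionOnto _ _ hc, by ext; simp, by ext; simp,
    IsArtinian.bijective_of_injective_endomorphism _ ?_⟩
  refine (injective_iff_map_eq_zero _).2 fun x hx => ?_
  have hx' : (u ^ (m + 1)) x = -(Submodule.projectionOnto _ _ hc x : U) :=
    eq_neg_of_add_eq_zero_left hx
  have hux : (u ^ (m + 1)) x = 0 := (Submodule.disjoint_def.1 hc.disjoint) _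
    (hx' ▸ neg_mem (Subtype.property _)) ⟨x, rfl⟩
  rw [hux, Submodule.projectionOnto_apply_of_mem_left hc hux] at hx'
  exact neg_eq_zero.1 hx'.symm

lemma ExtIso.exists_inAdd_iff_hasProjectiveDimensionLT {U : ModuleCat.{u} A} [IsNoetherian A U]
    [IsArtinian A U] (u : U ⟶ U) : ∃ Y : ModuleCat.{u} A, InAdd A U Y ∧
      ∀ n, ExtIso n u ↔ HasProjectiveDimensionLT Y n := by
  obtain ⟨m, Y, p, hp, hY, hbij⟩ := exists_pow_fitting u.hom
  refine ⟨ModuleCat.of A Y, .of_retract Y.subtype p hp, fun n => ?_⟩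
  let v : U ⟶ U := ModuleCat.ofHom (u.hom ^ (m + 1))
  have hv : (End.of u ^ (m + 1) : End U) = v := map_pow U.endRingEquiv.symm u.hom (m + 1) |>.symm
  have : IsIso (v + ModuleCat.ofHom p ≫ ModuleCat.ofHom Y.subtype) :=
    (ConcreteCategory.isIso_iff_bijective _).2 hbij
  calc ExtIso n u ↔ ExtIso n v := hv ▸ ExtIso.pow_succ_iff.symm
    _ ↔ HasProjectiveDimensionLT (ModuleCat.of A Y) n :=
      ExtIso.iff_of_fitting (i := ModuleCat.ofHom Y.subtype) (p := ModuleCat.ofHom p)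
        (ModuleCat.hom_ext hp) (ModuleCat.hom_ext hY) n

lemma isSyzygy_ker {P M : ModuleCat.{u} A} [Module.Projective A P] (g : P →ₗ[A] M)
    (hg : Function.Surjective g) : IsSyzygy (ModuleCat.of A (LinearMap.ker g)) M :=
  ⟨P, _, ModuleCat.ofHom g, _, (IsProjective.iff_projective P).1 ‹_›,
    LinearMap.shortExact_shortComplexKer hg⟩

lemma IsSyzygy.pi {κ : Type} [Finite κ] {K M : κ → ModuleCat.{u} A}
    (h : ∀ t, IsSyzygy (K t) (M t)) :
    IsSyzygy (ModuleCat.of A (∀ t, K t)) (ModuleCat.of A (∀ t, M t)) := by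
  have := Fintype.ofFinite κ
  choose P i p w hP hS using h
  have (t : κ) := (IsProjective.iff_projective (P t)).2 (hP t)
  refine ⟨ModuleCat.of A (∀ t, P t), ModuleCat.ofHom (LinearMap.piMap fun t => (i t).hom),
    ModuleCat.ofHom (LinearMap.piMap fun t => (p t).hom), ?_, ?_,
    ModuleCat.shortComplex_shortExact _ (fun x => ?_) ?_ ?_⟩
  · ext x t
    exact ConcreteCategory.congr_hom (w t) (x t)
  · rw [← IsProjective.iff_projective]
    exact .of_equiv (DFinsupp.linearEquivFunOnFintype (R := A) (M := fun t => P t))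
  · have hex (t : κ) :=
      (ShortComplex.ShortExact.moduleCat_exact_iff_function_exact _).1 (hS t).exact
    exact funext_iff.trans <| (forall_congr' fun t => hex t (x t)).trans
      (by simp [Set.range_piMap])
  · exact Function.Injective.piMap fun t => (ModuleCat.mono_iff_injective _).1 (hS t).mono_f
  · exact Function.Surjective.piMap fun t => (ModuleCat.epi_iff_surjective _).1 (hS t).epi_g

lemma exists_finite_isSyzygy [IsNoetherianRing A] (M : ModuleCat.{u} A) [Module.Finite A M] :
    ∃ K : ModuleCat.{u} A, Module.Finite A K ∧ IsSyzygy K M := by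
  obtain ⟨n, g, hg⟩ := Module.Finite.exists_fin' A M
  exact ⟨_, inferInstanceAs (Module.Finite A (LinearMap.ker g)),
    isSyzygy_ker (P := ModuleCat.of A (Fin n → A)) g hg⟩

end ProjectiveDimension

section StableRange

open CategoryTheory Limits

/-- For an increasing chain of congruences on the free commutative monoid `ℕ^ι`, the differences of
congruent elements form an increasing chain of subgroups of the noetherian group `ℤ^ι`. -/
theorem exists_forall_addCon_add {ι : Type*} [Finite ι] {r : ℕ → AddCon (ι → ℕ)}
    (hr : Monotone r) : ∃ n, ∀ m a b, r m a b → ∃ c, r n (a + c) (b + c) := by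
  let vec : (ι → ℕ) →+ ι → ℤ := (Nat.castAddMonoidHom ℤ).compLeft ι
  let V (m : ℕ) : AddSubgroup (ι → ℤ) :=
    { carrier := {v | ∃ a b, r m a b ∧ vec a - vec b = v}
      zero_mem' := ⟨0, 0, (r m).refl 0, sub_self _⟩
      add_mem' := by
        rintro _ _ ⟨a, b, h, rfl⟩ ⟨a', b', h', rfl⟩
        exact ⟨a + a', b + b', (r m).add h h', by simp only [map_add]; abel⟩
      neg_mem' := by
        rintro _ ⟨a, b, h, rfl⟩
        exact ⟨b, a, (r m).symm h, (neg_sub _ _).symm⟩ }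
  have hV : Monotone fun m => AddSubgroup.toIntSubmodule (V m) := fun m m' hm => by
    rintro _ ⟨a, b, h, rfl⟩
    exact ⟨a, b, hr hm h, rfl⟩
  obtain ⟨n, hn⟩ := monotone_stabilizes_iff_noetherian.2
    (inferInstanceAs (IsNoetherian ℤ (ι → ℤ))) ⟨_, hV⟩
  refine ⟨n, fun m a b h => ?_⟩
  obtain ⟨a', b', h', hv⟩ : vec a - vec b ∈ AddSubgroup.toIntSubmodule (V n) := by
    have h1 := hn _ (le_max_left n m)
    exact h1.symm ▸ hV (le_max_right n m) ⟨a, b, h, rfl⟩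
  have hab : a + b' = a' + b := by
    ext j
    have hj : (a j : ℤ) - b j = a' j - b' j := (congrFun hv j).symm
    simp only [Pi.add_apply]
    lia
  exact ⟨b', by simpa only [hab, add_comm b] using (r n).add h' ((r n).refl b)⟩

variable {A : Type u} [Ring A] {ι : Type}

/-- The direct sum `⨁ⱼ (L j)^(a j)`, realized as a product. -/
abbrev multiplicitySum (L : ι → ModuleCat.{u} A) (a : ι → ℕ) : ModuleCat.{u} A :=
  ModuleCat.of A (∀ t : Σ j, Fin (a j), L t.1)

lemma nonempty_iso_multiplicitySum_add (L : ι → ModuleCat.{u} A) (a b : ι → ℕ) :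
    Nonempty (multiplicitySum L (a + b) ≅ multiplicitySum L a ⊞ multiplicitySum L b) := by
  let e : (Σ j, Fin (a j)) ⊕ (Σ j, Fin (b j)) ≃ Σ j, Fin ((a + b) j) :=
    (Equiv.sigmaSumDistrib _ _).symm.trans (Equiv.sigmaCongrRight fun j => finSumFinEquiv)
  have E : multiplicitySum L (a + b) ≃ₗ[A] multiplicitySum L a × multiplicitySum L b :=
    (LinearEquiv.piCongrLeft A (fun t : Σ j, Fin ((a + b) j) => (L t.1 : Type u)) e).symm ≪≫ₗ
      LinearEquiv.sumPiEquivProdPi A _ _ fun s => L (e s).1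
  exact ⟨E.toModuleIso ≪≫ (ModuleCat.biprodIsoProd _ _).symm⟩

lemma exists_iso_multiplicitySum [Finite ι] (L : ι → ModuleCat.{u} A) {κ : Type} [Finite κ]
    (s : κ → ι) :
    ∃ a, Nonempty (ModuleCat.of A (∀ t, L (s t)) ≅ multiplicitySum L a) := by
  let e : (Σ j, Fin (Nat.card {t // s t = j})) ≃ κ :=
    (Equiv.sigmaCongrRight fun j => (Finite.equivFin _).symm).trans (Equiv.sigmaFiberEquiv s)
  have he (t) : s (e t) = t.1 := ((Finite.equivFin {x // s x = t.1}).symm t.2).2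
  exact ⟨_, ⟨((LinearEquiv.piCongrLeft A (fun t => L (s t)) e).symm ≪≫ₗ
    LinearEquiv.piCongrRight fun t => (eqToIso (congrArg L (he t))).toLinearEquiv).toModuleIso⟩⟩

lemma InAdd.multiplicitySum [Finite ι] {L : ι → ModuleCat.{u} A} (a : ι → ℕ) :
    InAdd A (ModuleCat.of A (∀ j, L j)) (multiplicitySum L a) :=
  .pi fun t => .of_pi L t.1

/-- The congruence on `ℕ^ι` which identifies the stable isomorphism classes of the modules
`⨁ⱼ (L j)^(a j)`. -/
def stableCon (L : ι → ModuleCat.{u} A) : AddCon (ι → ℕ) where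
  r a b := ∃ f : multiplicitySum L a ⟶ multiplicitySum L b, ExtIso 1 f
  iseqv :=
    { refl := fun a => ⟨𝟙 _, .of_isIso 1 _⟩
      symm := fun ⟨_, h⟩ => h.exists_reverse
      trans := fun ⟨_, h⟩ ⟨_, h'⟩ => ⟨_, h.comp h'⟩ }
  add' := fun {a b c d} ⟨f, hf⟩ ⟨f', hf'⟩ => by
    obtain ⟨e⟩ := nonempty_iso_multiplicitySum_add L a c
    obtain ⟨e'⟩ := nonempty_iso_multiplicitySum_add L b d
    exact ⟨e.hom ≫ biprod.map f f' ≫ e'.inv, (ExtIso.of_isIso 1 _).comp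
      ((ExtIso.biprodMap_iff.2 ⟨hf, hf'⟩).comp (.of_isIso 1 _))⟩

lemma exists_syzygy_tower [IsNoetherianRing A] (L : ι → ModuleCat.{u} A)
    [∀ j, Module.Finite A (L j)] : ∃ T : ℕ → ι → ModuleCat.{u} A, T 0 = L ∧
      (∀ m j, Module.Finite A (T m j)) ∧ ∀ m j, IsSyzygy (T (m + 1) j) (T m j) := by
  choose Ω hfin hΩ using fun M : {M : ModuleCat.{u} A // Module.Finite A M} =>
    have := M.2
    exists_finite_isSyzygy M.1
  let T (m : ℕ) (j : ι) : {M : ModuleCat.{u} A // Module.Finite A M} :=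
    (fun M => ⟨Ω M, hfin M⟩)^[m] ⟨L j, inferInstance⟩
  refine ⟨fun m j => (T m j).1, rfl, fun m j => (T m j).2, fun m j => ?_⟩
  simp only [T, Function.iterate_succ_apply']
  exact hΩ _

lemma IsSyzygy.multiplicitySum [Finite ι] {K L : ι → ModuleCat.{u} A}
    (h : ∀ j, IsSyzygy (K j) (L j)) (a : ι → ℕ) :
    IsSyzygy (multiplicitySum K a) (multiplicitySum L a) :=
  .pi fun t => h t.1

lemma ExtIso.exists_bound_of_stableCon [Finite ι] (L : ι → ModuleCat.{u} A)
    [∀ j, IsNoetherian A (L j)] [∀ j, IsArtinian A (L j)] :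
    ∃ D, ∀ (a b c : ι → ℕ) (f : multiplicitySum L a ⟶ multiplicitySum L b) (k : ℕ),
      stableCon L (a + c) (b + c) → ExtIso k f → ExtIso (D + 1) f := by
  obtain ⟨D, hD⟩ := exists_hasProjectiveDimensionLT_of_inAdd (ModuleCat.of A (∀ j, L j))
  refine ⟨D, fun a b c f k hc hf => ?_⟩
  obtain ⟨g, hg⟩ := (stableCon L).symm hc
  obtain ⟨e⟩ := nonempty_iso_multiplicitySum_add L a c
  obtain ⟨e'⟩ := nonempty_iso_multiplicitySum_add L b c
  let u := e.hom ≫ biprod.map f (𝟙 (multiplicitySum L c)) ≫ e'.inv ≫ g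
  have hu (n : ℕ) : ExtIso (n + 1) u ↔ ExtIso (n + 1) f := by
    rw [(of_isIso _ e.hom).precomp_iff, postcomp_iff, biprodMap_iff, and_iff_left (of_isIso _ _)]
    exact (of_isIso _ _).comp (hg.mono n.succ_pos)
  obtain ⟨Y, hY, huY⟩ := exists_inAdd_iff_hasProjectiveDimensionLT u
  have := hD Y (k + 1) ((InAdd.multiplicitySum _).trans hY)
    ((huY _).1 ((hu k).2 (hf.mono k.le_succ)))
  exact (hu D).1 ((huY _).2 (hasProjectiveDimensionLT_of_ge _ D _ D.le_succ))

section Tower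

variable [Finite ι] {T : ℕ → ι → ModuleCat.{u} A} (hT : ∀ m j, IsSyzygy (T (m + 1) j) (T m j))
include hT

lemma monotone_stableCon : Monotone fun m => stableCon (T m) := by
  refine monotone_nat_of_le_succ fun m a b => ?_
  rintro ⟨f, hf⟩
  obtain ⟨f', hf'⟩ := (IsSyzygy.multiplicitySum (hT m) a).exists_lift (.multiplicitySum (hT m) b) f
  exact ⟨f', (hf' 0).2 (hf.mono one_le_two)⟩

lemma exists_iterated_lift {a b : ι → ℕ} (f : multiplicitySum (T 0) a ⟶ multiplicitySum (T 0) b)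
    (m : ℕ) : ∃ f' : multiplicitySum (T m) a ⟶ multiplicitySum (T m) b,
      ∀ n, ExtIso (n + 1) f' ↔ ExtIso (n + 1 + m) f := by
  induction m with
  | zero => exact ⟨f, fun n => .rfl⟩
  | succ m ih =>
    obtain ⟨f', hf'⟩ := ih
    obtain ⟨f'', hf''⟩ :=
      (IsSyzygy.multiplicitySum (hT m) a).exists_lift (.multiplicitySum (hT m) b) f'
    refine ⟨f'', fun n => (hf'' n).trans ((hf' (n + 1)).trans ?_)⟩
    rw [show n + 1 + 1 + m = n + 1 + (m + 1) by lia]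

end Tower

theorem ExtIso.exists_bound_of_inAdd [IsArtinianRing A] (N : ModuleCat.{u} A) [Module.Finite A N] :
    ∃ D, ∀ (K M : ModuleCat.{u} A) (f : K ⟶ M) (k : ℕ), InAdd A N K → InAdd A N M →
      ExtIso k f → ExtIso D f := by
  obtain ⟨ι, _, L, hL, hdec⟩ := exists_finite_family_equiv_pi N
  have (j : ι) : Module.Finite A (L j) := have := (hL j).isNoetherian; inferInstance
  obtain ⟨T, rfl, hfin, hT⟩ := exists_syzygy_tower L
  obtain ⟨n, hn⟩ := exists_forall_addCon_add (monotone_stableCon hT)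
  obtain ⟨D, hD⟩ := ExtIso.exists_bound_of_stableCon (T n)
  refine ⟨D + 1 + n, fun K M f k hK hM hf => ?_⟩
  have hiso (X) (hX : InAdd A N X) : ∃ a, Nonempty (X ≅ multiplicitySum (T 0) a) := by
    obtain ⟨κ, _, s, ⟨e⟩⟩ := hdec X hX
    obtain ⟨a, ⟨e'⟩⟩ := exists_iso_multiplicitySum (T 0) s
    exact ⟨a, ⟨e.toModuleIso ≪≫ e'⟩⟩
  obtain ⟨a, ⟨eK⟩⟩ := hiso K hK
  obtain ⟨b, ⟨eM⟩⟩ := hiso M hM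
  have hconj (l : ℕ) : ExtIso l (eK.inv ≫ f ≫ eM.hom) ↔ ExtIso l f := by
    rw [(of_isIso l eK.inv).precomp_iff, (of_isIso l eM.hom).postcomp_iff]
  obtain ⟨f₁, hf₁⟩ := exists_iterated_lift hT (eK.inv ≫ f ≫ eM.hom) k
  obtain ⟨f₂, hf₂⟩ := exists_iterated_lift hT (eK.inv ≫ f ≫ eM.hom) n
  simp only [hconj] at hf₁ hf₂
  obtain ⟨c, hc⟩ := hn k a b ⟨f₁, (hf₁ 0).2 (hf.mono (by lia))⟩
  exact (hf₂ D).1 (hD a b c f₂ (k + 1) hc ((hf₂ k).2 (hf.mono (by lia))))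

end StableRange

section FinitisticDimension

open CategoryTheory Abelian

variable {A : Type u} [Ring A]

lemma projDimLE_iff [IsNoetherianRing A] (n : ℕ) (M : ModuleCat.{u} A) [Module.Finite A M] :
    ProjDimLE A n M ↔ HasProjectiveDimensionLT M (n + 1) := by
  have hker {M P : ModuleCat.{u} A} [Module.Projective A P] {g : P →ₗ[A] M}
      (hg : Function.Surjective g) (k : ℕ) :=
    (LinearMap.shortExact_shortComplexKer hg).hasProjectiveDimensionLT_X₃_iff k
      ((IsProjective.iff_projective P).1 ‹_›)
  induction n generalizing M with
  | zero =>
    rw [zero_add, ← projective_iff_hasProjectiveDimensionLT_one, ← IsProjective.iff_projective]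
    rfl
  | succ n ih =>
    refine ⟨fun ⟨P, g, _, _, hg, hk⟩ => (hker hg n).2 ((ih _).1 hk), fun h => ?_⟩
    obtain ⟨q, g, hg⟩ := Module.Finite.exists_fin' A M
    exact ⟨ModuleCat.of A (Fin q → A), g, inferInstance, inferInstance, hg,
      (ih _).2 ((hker (P := ModuleCat.of A (Fin q → A)) hg n).1 h)⟩

theorem finFinDim_of_forall_inAdd [IsArtinianRing A] (N : ModuleCat.{u} A) [Module.Finite A N]
    (h : ∀ X : ModuleCat.{u} A, Module.Finite A X → (∃ k, ProjDimLE A k X) →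
      ∃ (P : ModuleCat.{u} A) (g : P →ₗ[A] X), Function.Surjective g ∧ InAdd A N P ∧
        InAdd A N (ModuleCat.of A (LinearMap.ker g))) :
    FinFinDim A := by
  obtain ⟨D, hD⟩ := ExtIso.exists_bound_of_inAdd N
  refine ⟨D, fun X hX hpd => ?_⟩
  obtain ⟨P, g, hg, hP, hK⟩ := h X hX hpd
  obtain ⟨k, hk⟩ := hpd
  have hS := LinearMap.shortExact_shortComplexKer hg
  have : HasProjectiveDimensionLT g.shortComplexKer.X₃ (k + 1) := (projDimLE_iff k X).1 hk
  have hiso := hD _ _ _ (k + 1) hK hP (ExtIso.of_hasProjectiveDimensionLT hS)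
  exact (projDimLE_iff D X).2 (hiso.hasProjectiveDimensionLT hS)

end FinitisticDimension

section Induction

lemma RepFinite.exists_inAdd {B : Type u} [Ring B] (hB : RepFinite B) :
    ∃ N : ModuleCat.{u} B, Module.Finite B N ∧
      ∀ M : ModuleCat.{u} B, IsNoetherian B M → IsArtinian B M → InAdd B N M := by
  obtain ⟨k, N, hN⟩ := hB
  let J := {i : Fin k // Module.Finite B (N i)}
  have (j : J) : Module.Finite B (N j) := j.2
  refine ⟨ModuleCat.of B (∀ j : J, N j), inferInstanceAs (Module.Finite B (∀ j : J, N j)),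
    fun M _ _ => ?_⟩
  obtain ⟨κ, _, I, hI, ⟨e⟩⟩ := exists_equiv_pi_modIndec M
  have hsummand (t : κ) : InAdd B (ModuleCat.of B (∀ j : J, N j)) (I t) := by
    have hMI : InAdd B M (I t) := .trans (.of_equiv (X := .of B (∀ t, I t)) e.symm) (.of_pi I t)
    have := hMI.isNoetherian
    obtain ⟨i, ⟨f⟩⟩ := hN (I t) inferInstance (hI t)
    exact .trans (.of_pi (fun j : J => N j) ⟨i, .equiv f⟩) (.of_equiv f)
  exact .trans (.pi hsummand) (.of_equiv e)

variable {R : Type u} [CommRing R] {B A : Type u} [Ring B] [Ring A] [Algebra R B] [Algebra R A]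
  (φ : B →ₐ[R] A)

variable (X Y : Type u) [AddCommGroup X] [Module R X] [Module B X]

/-- The `A`-submodule of `A ⊗_R X` generated by the relations `a φ(b) ⊗ x = a ⊗ b x`, whose quotient
is `A ⊗_B X`. -/
def inducedRel : Submodule A (A ⊗[R] X) :=
  Submodule.span A {z | ∃ (a : A) (b : B) (x : X), z = (a * φ b) ⊗ₜ[R] x - a ⊗ₜ[R] (b • x)}

/-- The `A`-module `A ⊗_B X` induced by a `B`-module `X`, realized as a quotient of `A ⊗_R X` in the
same way as `relTensor`. -/
abbrev inducedModule : Type u := (A ⊗[R] X) ⧸ inducedRel φ X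

variable {X Y}

lemma inducedModule.mk_tmul_smul (a : A) (b : B) (x : X) :
    (Submodule.Quotient.mk (a ⊗ₜ[R] (b • x)) : inducedModule φ X) =
      Submodule.Quotient.mk ((a * φ b) ⊗ₜ[R] x) := by
  refine ((Submodule.Quotient.eq (inducedRel φ X)).2 ?_).symm
  exact Submodule.subset_span ⟨a, b, x, rfl⟩

lemma inducedModule.finite [Module.Finite B X] : Module.Finite A (inducedModule φ X) := by
  obtain ⟨s, hs⟩ := Module.Finite.fg_top (R := B) (M := X)
  let ε (x : X) : inducedModule φ X := Submodule.Quotient.mk (1 ⊗ₜ x)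
  have hε (a : A) (x : X) : Submodule.Quotient.mk (a ⊗ₜ x) = a • ε x := by
    rw [← Submodule.Quotient.mk_smul, TensorProduct.smul_tmul', smul_eq_mul, mul_one]
  have htmul (x : X) (a : A) : Submodule.Quotient.mk (a ⊗ₜ x) ∈ Submodule.span A (ε '' s) := by
    induction (hs ▸ trivial : x ∈ Submodule.span B (s : Set X)) using Submodule.span_induction
      generalizing a with
    | mem x hx => exact hε a x ▸ Submodule.smul_mem _ _ (Submodule.subset_span ⟨x, hx, rfl⟩)
    | zero => simp
    | add x y _ _ hx hy => rw [TensorProduct.tmul_add]; exact add_mem (hx a) (hy a)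
    | smul b x _ hx => exact mk_tmul_smul φ a b x ▸ hx (a * φ b)
  have htop : Submodule.span A (ε '' s) = ⊤ := by
    refine eq_top_iff.2 fun z _ => ?_
    obtain ⟨z, rfl⟩ := Submodule.Quotient.mk_surjective _ z
    induction z with
    | zero => exact zero_mem _
    | tmul a x => exact htmul x a
    | add z z' hz hz' => exact add_mem (hz trivial) (hz' trivial)
  exact ⟨htop ▸ Submodule.fg_span (s.finite_toSet.image ε)⟩

variable [AddCommGroup Y] [Module R Y] [Module B Y] [IsScalarTower R B X] [IsScalarTower R B Y]

/-- The `A`-linear map `A ⊗_B X → A ⊗_B Y` induced by a `B`-linear map `X → Y`. -/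
noncomputable def inducedMap (f : X →ₗ[B] Y) : inducedModule φ X →ₗ[A] inducedModule φ Y :=
  Submodule.mapQ _ _ (TensorProduct.AlgebraTensorModule.map .id (f.restrictScalars R)) <| by
    rw [inducedRel, Submodule.span_le]
    rintro _ ⟨a, b, x, rfl⟩
    exact Submodule.subset_span ⟨a, b, f x, by simp⟩

lemma InAdd.induced (h : InAdd B (ModuleCat.of B X) (ModuleCat.of B Y)) :
    InAdd A (ModuleCat.of A (inducedModule φ X)) (ModuleCat.of A (inducedModule φ Y)) := by
  obtain ⟨k, i, p, hip⟩ := h.exists_sum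
  refine .of_sum (X := ModuleCat.of A (inducedModule φ Y)) (fun t => inducedMap φ (i t))
    (fun t => inducedMap φ (p t)) fun z => ?_
  obtain ⟨z, rfl⟩ := Submodule.Quotient.mk_surjective _ z
  induction z with
  | zero => simp
  | add z z' hz hz' =>
    simp only [Submodule.Quotient.mk_add, map_add, Finset.sum_add_distrib, hz, hz']
  | tmul a y =>
    calc ∑ t, (inducedRel φ Y).mkQ (a ⊗ₜ p t (i t y))
        = (inducedRel φ Y).mkQ (a ⊗ₜ ∑ t, p t (i t y)) := by rw [TensorProduct.tmul_sum, map_sum]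
      _ = (inducedRel φ Y).mkQ (a ⊗ₜ y) := by rw [hip]

theorem exists_inAdd_of_relProjective [IsArtinianRing R] [Module.Finite R A] (hB : RepFinite B) :
    ∃ N : ModuleCat.{u} A, Module.Finite A N ∧
      ∀ X : ModuleCat.{u} A, Module.Finite A X → RelProjective φ X → InAdd A N X := by
  obtain ⟨N, _, hN⟩ := hB.exists_inAdd
  let : Module R N := Module.compHom N (algebraMap R B)
  have : IsScalarTower R B N := .of_algebraMap_smul fun _ _ => rfl
  refine ⟨ModuleCat.of A (inducedModule φ N), inducedModule.finite φ, fun X _ hrel => ?_⟩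
  obtain ⟨i, p, hip⟩ := hrel
  let : Module R X := Module.compHom X (algebraMap R A)
  let : Module B X := Module.compHom X φ.toRingHom
  have : IsScalarTower R A X := .of_algebraMap_smul fun _ _ => rfl
  have : IsScalarTower R B X := .of_algebraMap_smul fun r x => congrArg (· • x) (φ.commutes r)
  have : Module.Finite R X := Module.Finite.trans A X
  have hX := hN (ModuleCat.of B X) (isNoetherian_of_tower R inferInstance)
    (isArtinian_of_tower R inferInstance)
  exact .trans (hX.induced φ) (.of_retract (N := ModuleCat.of A (inducedModule φ X)) i p hip)

theorem statement0_general [IsArtinianRing R] [Module.Finite R A] (hB : RepFinite B)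
    (h : ∀ X : ModuleCat.{u} A, Module.Finite A X → (∃ k, ProjDimLE A k X) →
      ∃ (P : ModuleCat.{u} A) (g : P →ₗ[A] X), RelProjective φ P ∧ Module.Finite A P ∧
        Function.Surjective g ∧ RelProjective φ (ModuleCat.of A (LinearMap.ker g))) :
    FinFinDim A := by
  have : IsArtinianRing A := .of_finite R A
  obtain ⟨N, _, hN⟩ := exists_inAdd_of_relProjective φ hB
  refine finFinDim_of_forall_inAdd N fun X hX hpd => ?_
  obtain ⟨P, g, hP, hPf, hg, hK⟩ := h X hX hpd
  exact ⟨P, g, hg, hN P hPf hP, hN _ (inferInstanceAs (Module.Finite A (LinearMap.ker g))) hK⟩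

end Induction

variable {R : Type u} [CommRing R] [IsArtinianRing R]
  {B A : Type u} [Ring B] [Ring A] [Algebra R B] [Algebra R A]
  [Module.Finite R B] [Module.Finite R A]

/-- If `B` is representation-finite and the relative finitistic dimension of
`φ : B → A` is at most `1`, then the finitistic dimension of `A` is finite. -/
theorem statement0 (φ : B →ₐ[R] A)
    (hB : RepFinite B)
    (hfd : ∀ X : ModuleCat.{u} A, Module.Finite A X → (∃ k : ℕ, ProjDimLE A k X) →
      RelProjDimLE φ 1 X) :
    FinFinDim A :=
  statement0_general φ hB fun X hX hpd =>
    let ⟨P, g, hP, hPf, hg, _, hK⟩ := hfd X hX hpd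
    ⟨P, g, hP, hPf, hg, hK⟩
end

section
/- Let B = A₀ ⊆ A₁ ⊆ ⋯ ⊆ A_{s-1} ⊆ A_s = A be a chain of subalgebras (with the same identity) of an Artin algebra A such that rad(A_{i-1}) is a left ideal of A_i for all 1 ≤ i ≤ s, where s is a positive integer, and suppose that A is 1-syzygy-finite. If the quotient algebra B/(rad(A_{s-1})⋯rad(A₁)rad(A₀)) is B-syzygy-finite (for example, representation-finite), then the finitistic dimension of B is finite. -/
universe u

open TensorProduct

variable {R : Type u} [CommRing R] [IsArtinianRing R]
  {A : Type u} [Ring A] [Algebra R A] [Module.Finite R A]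

/-!
Write `B = A₀` and let `I` be the ideal `rad(A_{s-1}) ⋯ rad(A₀)` of `B`, which is a left ideal of
`A` by the hypotheses on the chain. Every first syzygy `X` over `B` embeds in a free `A`-module, and
the largest `A`-submodule `Y` contained in `X` satisfies `IX ⊆ Y`. So `X` is an extension of the
module `X/Y` killed by `I` by a submodule `Y` of a free `A`-module. As `A` is 1-syzygy-finite, only
finitely many indecomposable modules occur in such `Y`, also after restriction to `B`. Rotating
`0 → Y → X → X/Y → 0` and applying `Ω^m` gives
`0 → Ω^{m+1}(X/Y) → Ω^m Y ⊕ P → Ω^m X ⊕ P' → 0` with `P` and `P'` projective, where the first two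
terms lie, up to projective summands, in `add M` for a fixed module `M`.

The Igusa–Todorov argument bounds the projective dimension of `Z` in a short exact sequence
`0 → U → V → Z → 0` with `U, V ∈ add M` and `pd Z < ∞`. For high powers `Ωⁿ U` and `Ωⁿ V` are stably
isomorphic, and by noetherianity of the monoid algebra of the finitely generated monoid of stable
classes of `add M` this happens for an `n` depending only on `M`. If `U` and `V` are themselves
stably isomorphic, Fitting's lemma applied to `U → V ≃ U` (up to projective summands) bounds `pd Z`
in terms of the summands of `U` of finite projective dimension.
-/

section ShortExactSequences

open CategoryTheory Abelian

variable {Λ : Type u} [Ring Λ]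
variable {X Y Z : Type u} [AddCommGroup X] [Module Λ X] [AddCommGroup Y] [Module Λ Y]
  [AddCommGroup Z] [Module Λ Z]

/-- `0 → X → Y → Z → 0` is a short exact sequence of modules; unbundled, so that the modules need
not be objects of a category. -/
structure IsSES (f : X →ₗ[Λ] Y) (g : Y →ₗ[Λ] Z) : Prop where
  injective : Function.Injective f
  exact : Function.Exact f g
  surjective : Function.Surjective g

theorem isSES_inr_fst : IsSES (LinearMap.inr Λ X Y) (LinearMap.fst Λ X Y) :=
  ⟨LinearMap.inr_injective, Function.Exact.inr_fst, LinearMap.fst_surjective⟩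

theorem isSES_inl_snd : IsSES (LinearMap.inl Λ X Y) (LinearMap.snd Λ X Y) :=
  ⟨LinearMap.inl_injective, Function.Exact.inl_snd, LinearMap.snd_surjective⟩

theorem isSES_ker_subtype {g : X →ₗ[Λ] Y} (hg : Function.Surjective g) :
    IsSES (LinearMap.ker g).subtype g :=
  ⟨Submodule.injective_subtype _, LinearMap.exact_subtype_ker_map g, hg⟩

theorem isSES_subtype_projectionOnto {p q : Submodule Λ X} (h : IsCompl p q) :
    IsSES q.subtype (p.projectionOnto q h) :=
  ⟨Submodule.injective_subtype _, by
    rw [LinearMap.exact_iff, Submodule.ker_projectionOnto, Submodule.range_subtype],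
    Submodule.projectionOnto_surjective h⟩

variable (Λ X) in
/-- The projective dimension of the module `X` is smaller than `n`. -/
abbrev ProjDimLT (n : ℕ) : Prop := HasProjectiveDimensionLT (ModuleCat.of Λ X) n

theorem projDimLT_one_iff : ProjDimLT Λ X 1 ↔ Module.Projective Λ X := by
  rw [IsProjective.iff_projective X, projective_iff_hasProjectiveDimensionLT_one]

theorem ProjDimLT.mono {m n : ℕ} (h : ProjDimLT Λ X m) (hmn : m ≤ n) : ProjDimLT Λ X n :=
  have := h
  hasProjectiveDimensionLT_of_ge _ m n hmn

namespace IsSES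

variable {f : X →ₗ[Λ] Y} {g : Y →ₗ[Λ] Z} {n : ℕ}

theorem shortExact (h : IsSES f g) :
    (ShortComplex.mk (ModuleCat.ofHom f) (ModuleCat.ofHom g)
      (by rw [← ModuleCat.ofHom_comp, h.exact.linearMap_comp_eq_zero]; rfl)).ShortExact :=
  ModuleCat.shortComplex_shortExact _ h.exact h.injective h.surjective

theorem projDimLT_right (h : IsSES f g) (hX : ProjDimLT Λ X n) (hY : ProjDimLT Λ Y (n + 1)) :
    ProjDimLT Λ Z (n + 1) :=
  h.shortExact.hasProjectiveDimensionLT_X₃ n hX hY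

theorem projDimLT_left (h : IsSES f g) (hY : ProjDimLT Λ Y n) (hZ : ProjDimLT Λ Z (n + 1)) :
    ProjDimLT Λ X n :=
  h.shortExact.hasProjectiveDimensionLT_X₁ n hY hZ

end IsSES

end ShortExactSequences

section ExtIsomorphisms

open CategoryTheory Abelian

variable {Λ : Type u} [Ring Λ]
variable {X Y Z : Type u} [AddCommGroup X] [Module Λ X] [AddCommGroup Y] [Module Λ Y]
  [AddCommGroup Z] [Module Λ Z]

/-- The map `Extⁱ(Y, S) → Extⁱ(X, S)` induced by a linear map `X → Y`. -/
noncomputable def extPrecomp (f : X →ₗ[Λ] Y) (S : ModuleCat.{u} Λ) (i : ℕ) :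
    Ext (ModuleCat.of Λ Y) S i →+ Ext (ModuleCat.of Λ X) S i :=
  (Ext.mk₀ (ModuleCat.ofHom f)).precomp S (zero_add i)

theorem extPrecomp_comp (g : Y →ₗ[Λ] Z) (f : X →ₗ[Λ] Y) (S : ModuleCat.{u} Λ) (i : ℕ) :
    extPrecomp (g ∘ₗ f) S i = (extPrecomp f S i).comp (extPrecomp g S i) := by
  ext e
  simp [extPrecomp, ModuleCat.ofHom_comp, ← Ext.mk₀_comp_mk₀_assoc]

theorem extPrecomp_id (S : ModuleCat.{u} Λ) (i : ℕ) :
    extPrecomp (LinearMap.id : X →ₗ[Λ] X) S i = AddMonoidHom.id _ :=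
  AddMonoidHom.ext Ext.mk₀_id_comp

theorem extPrecomp_zero (S : ModuleCat.{u} Λ) (i : ℕ) :
    extPrecomp (0 : X →ₗ[Λ] Y) S i = 0 := by
  ext e
  change (Ext.mk₀ (0 : ModuleCat.of Λ X ⟶ ModuleCat.of Λ Y)).comp e (zero_add i) = 0
  rw [Ext.mk₀_zero, Ext.zero_comp]

/-- The map `f` induces bijections on `Extⁱ(-, S)` for all modules `S` and all `i ≥ n`. -/
def ExtBijFrom (n : ℕ) (f : X →ₗ[Λ] Y) : Prop :=
  ∀ (S : ModuleCat.{u} Λ) (i : ℕ), n ≤ i → Function.Bijective (extPrecomp f S i)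

namespace ExtBijFrom

variable {f : X →ₗ[Λ] Y} {g : Y →ₗ[Λ] Z} {n : ℕ}

theorem mono {m : ℕ} (h : ExtBijFrom m f) (hmn : m ≤ n) : ExtBijFrom n f :=
  fun S i hi => h S i (hmn.trans hi)

theorem comp (hg : ExtBijFrom n g) (hf : ExtBijFrom n f) : ExtBijFrom n (g ∘ₗ f) := by
  intro S i hi
  rw [extPrecomp_comp]
  exact (hf S i hi).comp (hg S i hi)

theorem of_comp_left (hgf : ExtBijFrom n (g ∘ₗ f)) (hg : ExtBijFrom n g) : ExtBijFrom n f := by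
  intro S i hi
  have h := hgf S i hi
  rw [extPrecomp_comp] at h
  exact (Function.Bijective.of_comp_iff _ (hg S i hi)).1 h

theorem of_comp_right (hgf : ExtBijFrom n (g ∘ₗ f)) (hf : ExtBijFrom n f) : ExtBijFrom n g := by
  intro S i hi
  have h := hgf S i hi
  rw [extPrecomp_comp] at h
  exact (Function.Bijective.of_comp_iff' (hf S i hi) _).1 h

theorem id : ExtBijFrom n (LinearMap.id : X →ₗ[Λ] X) := by
  intro S i _
  rw [extPrecomp_id]
  exact Function.bijective_id

theorem of_equiv (e : X ≃ₗ[Λ] Y) : ExtBijFrom n e.toLinearMap := by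
  intro S i _
  refine Function.bijective_iff_has_inverse.2 ⟨extPrecomp e.symm.toLinearMap S i, ?_, ?_⟩ <;>
  · intro x
    rw [← AddMonoidHom.comp_apply, ← extPrecomp_comp]
    simp [extPrecomp_id]

theorem pow {f : X →ₗ[Λ] X} (hf : ExtBijFrom n f) (k : ℕ) : ExtBijFrom n (f ^ k) := by
  induction k with
  | zero => exact id
  | succ k ih => rw [pow_succ]; exact ih.comp hf

theorem of_pow {f : X →ₗ[Λ] X} {k : ℕ} (hf : ExtBijFrom n (f ^ (k + 1))) : ExtBijFrom n f := by
  intro S i hi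
  have h := hf S i hi
  constructor
  · rw [pow_succ', Module.End.mul_eq_comp, extPrecomp_comp, AddMonoidHom.coe_comp] at h
    exact h.1.of_comp
  · rw [pow_succ, Module.End.mul_eq_comp, extPrecomp_comp, AddMonoidHom.coe_comp] at h
    exact h.2.of_comp

theorem of_projDimLT_coker (h : IsSES f g) (hZ : ProjDimLT Λ Z n) : ExtBijFrom n f := by
  refine fun S i hi => ⟨(injective_iff_map_eq_zero _).2 fun y hy => ?_, fun x => ?_⟩
  · obtain ⟨z, rfl⟩ := Ext.contravariant_sequence_exact₂ h.shortExact S y hy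
    rw [z.eq_zero_of_hasProjectiveDimensionLT n hi, Ext.comp_zero]
  · exact Ext.contravariant_sequence_exact₁ h.shortExact S x (add_comm _ _)
      (Ext.eq_zero_of_hasProjectiveDimensionLT _ n (hi.trans (Nat.le_succ i)))

theorem of_projDimLT_ker (h : IsSES f g) (hX : ProjDimLT Λ X n) : ExtBijFrom (n + 1) g := by
  rintro S (_ | i) hi
  · contradiction
  refine ⟨(injective_iff_map_eq_zero _).2 fun z hz => ?_, fun y => ?_⟩
  · obtain ⟨x, rfl⟩ := Ext.contravariant_sequence_exact₃ h.shortExact S z hz (add_comm _ _)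
    rw [x.eq_zero_of_hasProjectiveDimensionLT n (Nat.le_of_succ_le_succ hi), Ext.comp_zero]
  · exact Ext.contravariant_sequence_exact₂ h.shortExact S y
      (Ext.eq_zero_of_hasProjectiveDimensionLT _ n (Nat.le_of_succ_le hi))

theorem projDimLT_coker (h : IsSES f g) (hf : ExtBijFrom n f) : ProjDimLT Λ Z (n + 1) := by
  rw [ProjDimLT, hasProjectiveDimensionLT_iff]
  rintro (_ | i) hi S z
  · contradiction
  have hgz : extPrecomp g S (i + 1) z = 0 := by
    apply (hf S (i + 1) (Nat.le_of_succ_le hi)).1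
    rw [← AddMonoidHom.comp_apply, ← extPrecomp_comp, h.exact.linearMap_comp_eq_zero,
      extPrecomp_zero, map_zero, AddMonoidHom.zero_apply]
  obtain ⟨x, rfl⟩ := Ext.contravariant_sequence_exact₃ h.shortExact S z hgz (add_comm 1 i)
  obtain ⟨y, rfl⟩ := (hf S i (Nat.le_of_succ_le_succ hi)).2 x
  exact h.shortExact.extClass_comp_assoc y

theorem projDimLT_of_comp_eq_zero (hg : ExtBijFrom n g) {r : Y →ₗ[Λ] X}
    (hr : r ∘ₗ f = LinearMap.id) (hgf : g ∘ₗ f = 0) : ProjDimLT Λ X n := by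
  rw [ProjDimLT, hasProjectiveDimensionLT_iff]
  intro i hi S x
  obtain ⟨z, hz⟩ := (hg S i hi).2 (extPrecomp r S i x)
  calc x = extPrecomp (r ∘ₗ f) S i x := by rw [hr, extPrecomp_id, AddMonoidHom.id_apply]
    _ = extPrecomp (g ∘ₗ f) S i z := by
      rw [extPrecomp_comp, extPrecomp_comp, AddMonoidHom.comp_apply, AddMonoidHom.comp_apply, hz]
    _ = 0 := by rw [hgf, extPrecomp_zero, AddMonoidHom.zero_apply]

theorem of_isCompl_ker_range {φ : Module.End Λ X}
    (hφ : IsCompl (LinearMap.ker φ) (LinearMap.range φ))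
    (hker : ProjDimLT Λ (LinearMap.ker φ) n) : ExtBijFrom (n + 1) φ := by
  have hrestrict : ExtBijFrom (n + 1) φ.rangeRestrict := by
    refine .of_projDimLT_ker (isSES_ker_subtype φ.surjective_rangeRestrict) ?_
    rwa [LinearMap.ker_rangeRestrict]
  have hincl : ExtBijFrom (n + 1) (LinearMap.range φ).subtype :=
    (of_projDimLT_coker (isSES_subtype_projectionOnto hφ) hker).mono (Nat.le_succ n)
  change ExtBijFrom (n + 1) ((LinearMap.range φ).subtype ∘ₗ φ.rangeRestrict)
  exact hincl.comp hrestrict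

/- By Fitting's lemma some power of `φ` splits `X` into its kernel and its image. The power still
induces isomorphisms on high `Ext` groups, so its kernel has finite projective dimension. -/
theorem of_projDimLT_summands [IsArtinian Λ X] [IsNoetherian Λ X] {φ : Module.End Λ X} {r : ℕ}
    (hφ : ExtBijFrom r φ)
    (hn : ∀ K C : Submodule Λ X, IsCompl K C → (∃ r, ProjDimLT Λ K r) → ProjDimLT Λ K n) :
    ExtBijFrom (n + 1) φ := by
  obtain ⟨k, hk⟩ := Filter.eventually_atTop.1 φ.eventually_isCompl_ker_pow_range_pow
  have hcompl := hk (k + 1) (Nat.le_succ k)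
  refine .of_pow (.of_isCompl_ker_range hcompl (hn _ _ hcompl ⟨r, ?_⟩))
  exact (hφ.pow (k + 1)).projDimLT_of_comp_eq_zero (Submodule.projectionOnto_comp_subtype hcompl)
    (LinearMap.ext fun x => LinearMap.mem_ker.1 x.2)

end ExtBijFrom

/- The isomorphism `e` turns `f` into an endomorphism of `X × Q` which, like `f`, induces
isomorphisms on high `Ext` groups. -/
theorem IsSES.projDimLT_of_stablyIso {P Q : Type u} [AddCommGroup P] [Module Λ P]
    [Module.Projective Λ P] [AddCommGroup Q] [Module Λ Q] [Module.Projective Λ Q]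
    [IsArtinian Λ (X × Q)] [IsNoetherian Λ (X × Q)]
    {f : X →ₗ[Λ] Y} {g : Y →ₗ[Λ] Z} (h : IsSES f g) (e : (X × Q) ≃ₗ[Λ] (Y × P)) {n : ℕ}
    (hn : ∀ K C : Submodule Λ (X × Q), IsCompl K C → (∃ r, ProjDimLT Λ K r) → ProjDimLT Λ K n)
    (hZ : ∃ r, ProjDimLT Λ Z r) : ProjDimLT Λ Z (n + 3) := by
  obtain ⟨r, hr⟩ := hZ
  have hfst : ExtBijFrom 2 (LinearMap.fst Λ X Q) :=
    .of_projDimLT_ker isSES_inr_fst (projDimLT_one_iff.2 inferInstance)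
  have hinl : ExtBijFrom 1 (e.symm.toLinearMap ∘ₗ LinearMap.inl Λ Y P) :=
    (ExtBijFrom.of_equiv e.symm).comp
      (.of_projDimLT_coker isSES_inl_snd (projDimLT_one_iff.2 inferInstance))
  have hf : ExtBijFrom r f := .of_projDimLT_coker h hr
  have hφ : ExtBijFrom (r + 2)
      ((e.symm.toLinearMap ∘ₗ LinearMap.inl Λ Y P) ∘ₗ (f ∘ₗ LinearMap.fst Λ X Q)) :=
    (hinl.mono (by lia)).comp ((hf.mono (by lia)).comp (hfst.mono (by lia)))
  have hf' : ExtBijFrom (n + 2) f :=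
    (((hφ.of_projDimLT_summands hn).mono (Nat.le_succ _)).of_comp_left
      (hinl.mono (by lia))).of_comp_right (hfst.mono (by lia))
  exact hf'.projDimLT_coker h

end ExtIsomorphisms

section DirectSummands

variable {Λ : Type u} [Ring Λ]
variable {X Y Z W : Type*} [AddCommGroup X] [Module Λ X] [AddCommGroup Y] [Module Λ Y]
  [AddCommGroup Z] [Module Λ Z] [AddCommGroup W] [Module Λ W]

variable (Λ X Y) in
/-- `X` is isomorphic to a direct summand of `Y`. In these terms `InAdd Λ N X` says that `X` is a
retract of a power of `N`. -/
def IsRetract : Prop := ∃ (i : X →ₗ[Λ] Y) (p : Y →ₗ[Λ] X), p ∘ₗ i = LinearMap.id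

namespace IsRetract

theorem trans (h : IsRetract Λ X Y) (h' : IsRetract Λ Y Z) : IsRetract Λ X Z := by
  obtain ⟨i, p, hp⟩ := h
  obtain ⟨j, q, hq⟩ := h'
  refine ⟨j ∘ₗ i, p ∘ₗ q, ?_⟩
  rw [LinearMap.comp_assoc, ← LinearMap.comp_assoc _ j q, hq, LinearMap.id_comp, hp]

theorem of_equiv (e : X ≃ₗ[Λ] Y) : IsRetract Λ X Y :=
  ⟨e.toLinearMap, e.symm.toLinearMap, by ext; simp⟩

theorem inl : IsRetract Λ X (X × Y) := ⟨LinearMap.inl Λ X Y, LinearMap.fst Λ X Y, by ext; simp⟩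

theorem inr : IsRetract Λ Y (X × Y) := ⟨LinearMap.inr Λ X Y, LinearMap.snd Λ X Y, by ext; simp⟩

theorem prodMap (h : IsRetract Λ X Y) (h' : IsRetract Λ Z W) :
    IsRetract Λ (X × Z) (Y × W) := by
  obtain ⟨i, p, hp⟩ := h
  obtain ⟨j, q, hq⟩ := h'
  refine ⟨i.prodMap j, p.prodMap q, ?_⟩
  rw [LinearMap.prodMap_comp, hp, hq, LinearMap.prodMap_id]

theorem arrow (ι : Type*) (h : IsRetract Λ X Y) : IsRetract Λ (ι → X) (ι → Y) := by
  obtain ⟨i, p, hp⟩ := h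
  exact ⟨i.compLeft ι, p.compLeft ι, LinearMap.ext fun v => funext fun j =>
    LinearMap.congr_fun hp (v j)⟩

theorem of_isCompl {K C : Submodule Λ X} (h : IsCompl K C) : IsRetract Λ K X :=
  ⟨K.subtype, K.projectionOnto C h, Submodule.projectionOnto_comp_subtype h⟩

theorem of_isUnit {i : X →ₗ[Λ] Y} {p : Y →ₗ[Λ] X} (h : IsUnit (p ∘ₗ i : Module.End Λ X)) :
    IsRetract Λ X Y := by
  obtain ⟨v, hv⟩ := h
  refine ⟨i, (↑v⁻¹ : Module.End Λ X) ∘ₗ p, ?_⟩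
  rw [LinearMap.comp_assoc, ← hv]
  exact v.inv_mul

theorem finite (h : IsRetract Λ X Y) [Module.Finite Λ Y] : Module.Finite Λ X := by
  obtain ⟨i, p, hp⟩ := h
  exact Module.Finite.of_surjective p fun x => ⟨i x, LinearMap.congr_fun hp x⟩

theorem exists_injective (h : IsRetract Λ X Y) : ∃ i : X →ₗ[Λ] Y, Function.Injective i := by
  obtain ⟨i, p, hp⟩ := h
  exact ⟨i, Function.LeftInverse.injective (LinearMap.congr_fun hp)⟩

theorem exists_isCompl_range (h : IsRetract Λ X Y) : ∃ (i : X →ₗ[Λ] Y) (C : Submodule Λ Y),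
    Function.Injective i ∧ IsCompl (LinearMap.range i) C := by
  obtain ⟨i, p, hp⟩ := h
  have hpi (x : X) : p (i x) = x := LinearMap.congr_fun hp x
  refine ⟨i, LinearMap.ker p, Function.LeftInverse.injective hpi, ?_, ?_⟩
  · rw [Submodule.disjoint_def]
    rintro _ ⟨x, rfl⟩ hx
    rw [← hpi x, LinearMap.mem_ker.1 hx, map_zero]
  · rw [codisjoint_iff, eq_top_iff]
    intro y _
    rw [← add_sub_cancel (i (p y)) y]
    exact Submodule.add_mem_sup ⟨_, rfl⟩ (by simp [hpi])

theorem exists_prod_equiv {X Y : Type u} [AddCommGroup X] [Module Λ X] [AddCommGroup Y]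
    [Module Λ Y] (h : IsRetract Λ X Y) :
    ∃ D : ModuleCat.{u} Λ, Nonempty ((X × D) ≃ₗ[Λ] Y) := by
  obtain ⟨i, C, hi, hC⟩ := h.exists_isCompl_range
  exact ⟨ModuleCat.of Λ C, ⟨((LinearEquiv.ofInjective i hi).prodCongr (.refl Λ C)).trans
    (Submodule.prodEquivOfIsCompl _ _ hC)⟩⟩

end IsRetract

end DirectSummands

section Indecomposables

variable {Λ : Type u} [Ring Λ]

namespace ModIndec

variable {N : ModuleCat.{u} Λ}

theorem not_isRetract_of_subsingleton (hN : ModIndec Λ N) {X : Type*} [AddCommGroup X]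
    [Module Λ X] [Subsingleton X] : ¬ IsRetract Λ N X := by
  intro h
  obtain ⟨i, hi⟩ := h.exists_injective
  have := hN.1
  exact not_subsingleton N hi.subsingleton

theorem nonempty_equiv_of_isRetract (hN : ModIndec Λ N) {X : ModuleCat.{u} Λ}
    (hX : ModIndec Λ X) (h : IsRetract Λ N X) : Nonempty (N ≃ₗ[Λ] X) := by
  obtain ⟨i, C, hi, hC⟩ := h.exists_isCompl_range
  have := hN.1
  have hrange : LinearMap.range i ≠ ⊥ := (LinearMap.range_eq_bot.not).2 fun h0 =>
    not_subsingleton N (⟨fun x y => hi (by rw [h0]; rfl)⟩ : Subsingleton N)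
  have hCbot := (hX.2 _ _ hC).resolve_left hrange
  subst hCbot
  exact ⟨.ofBijective i ⟨hi, LinearMap.range_eq_top.1 (eq_top_of_isCompl_bot hC)⟩⟩

variable [IsArtinian Λ N] [IsNoetherian Λ N]

theorem isLocalRing_end_s3 (hN : ModIndec Λ N) : IsLocalRing (Module.End Λ N) := by
  have := hN.1
  refine .of_isUnit_or_isUnit_one_sub_self fun f => ?_
  obtain ⟨k, hk⟩ := Filter.eventually_atTop.1 f.eventually_isCompl_ker_pow_range_pow
  have hcompl := hk (k + 1) (Nat.le_succ k)
  rcases hN.2 _ _ hcompl with hker | hrange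
  · have hsurj := hcompl.sup_eq_top
    rw [hker, bot_sup_eq, LinearMap.range_eq_top] at hsurj
    exact .inl <| (isUnit_pow_iff (Nat.succ_ne_zero k)).1 <|
      (Module.End.isUnit_iff _).2 ⟨LinearMap.ker_eq_bot.1 hker, hsurj⟩
  · have hnil : IsNilpotent f := ⟨k + 1, LinearMap.range_eq_bot.1 hrange⟩
    exact .inr hnil.isUnit_one_sub

theorem isRetract_or_isRetract_of_prod (hN : ModIndec Λ N) {X Y : Type*} [AddCommGroup X]
    [Module Λ X] [AddCommGroup Y] [Module Λ Y] (h : IsRetract Λ N (X × Y)) :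
    IsRetract Λ N X ∨ IsRetract Λ N Y := by
  have := hN.isLocalRing_end_s3
  obtain ⟨i, p, hp⟩ := h
  have hsum : ((p ∘ₗ LinearMap.inl Λ X Y) ∘ₗ (LinearMap.fst Λ X Y ∘ₗ i) : Module.End Λ N) +
      (p ∘ₗ LinearMap.inr Λ X Y) ∘ₗ (LinearMap.snd Λ X Y ∘ₗ i) = 1 := by
    ext x
    simpa [← map_add] using LinearMap.congr_fun hp x
  exact (IsLocalRing.isUnit_or_isUnit_of_add_one hsum).imp .of_isUnit .of_isUnit

theorem isRetract_of_arrow (hN : ModIndec Λ N) {X : Type*} [AddCommGroup X] [Module Λ X] {k : ℕ}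
    (h : IsRetract Λ N (Fin k → X)) : IsRetract Λ N X := by
  induction k with
  | zero => exact absurd h hN.not_isRetract_of_subsingleton
  | succ k ih =>
    exact (hN.isRetract_or_isRetract_of_prod
      (h.trans (.of_equiv (Fin.consLinearEquiv Λ fun _ => X).symm))).elim id ih

end ModIndec

theorem modIndec_induction {motive : ModuleCat.{u} Λ → Prop}
    (subsingleton : ∀ X : ModuleCat.{u} Λ, Subsingleton X → motive X)
    (indec : ∀ X : ModuleCat.{u} Λ, ModIndec Λ X → motive X)
    (isCompl : ∀ (X : ModuleCat.{u} Λ) [IsArtinian Λ X] [IsNoetherian Λ X] (K C : Submodule Λ X),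
      IsCompl K C → motive (.of Λ K) → motive (.of Λ C) → motive X)
    (X : ModuleCat.{u} Λ) [IsArtinian Λ X] [IsNoetherian Λ X] : motive X := by
  induction hl : Module.length Λ X using WellFoundedLT.induction generalizing X with
  | _ l ih =>
    rcases subsingleton_or_nontrivial X with hX | hX
    · exact subsingleton X hX
    by_cases hindec : ModIndec Λ X
    · exact indec X hindec
    obtain ⟨K, C, hKC, hK, hC⟩ : ∃ K C : Submodule Λ X, IsCompl K C ∧ K ≠ ⊥ ∧ C ≠ ⊥ := by
      simpa [ModIndec, hX] using hindec
    have length_lt {p q : Submodule Λ X} (hpq : IsCompl p q) (hq : q ≠ ⊥) :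
        Module.length Λ p < l :=
      hl ▸ Submodule.length_lt fun hp => hq (eq_bot_of_top_isCompl (hp ▸ hpq))
    exact isCompl X K C hKC (ih _ (length_lt hKC hC) (.of Λ K) rfl)
      (ih _ (length_lt hKC.symm hK) (.of Λ C) rfl)

theorem ClassRepFinite.union {C D E : ModuleCat.{u} Λ → Prop} (hC : ClassRepFinite Λ C)
    (hD : ClassRepFinite Λ D) (h : ∀ N, ModIndec Λ N → E N → C N ∨ D N) :
    ClassRepFinite Λ E := by
  obtain ⟨k, F, hF⟩ := hC
  obtain ⟨l, G, hG⟩ := hD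
  refine ⟨k + l, Fin.append F G, fun N hN hindec => ?_⟩
  rcases h N hindec hN with hCN | hDN
  · obtain ⟨i, hi⟩ := hF N hCN hindec
    exact ⟨Fin.castAdd l i, by rwa [Fin.append_left]⟩
  · obtain ⟨i, hi⟩ := hG N hDN hindec
    exact ⟨Fin.natAdd k i, by rwa [Fin.append_right]⟩

theorem classRepFinite_isRetract (X : ModuleCat.{u} Λ) [IsArtinian Λ X] [IsNoetherian Λ X] :
    ClassRepFinite Λ fun N => IsRetract Λ N X := by
  induction X using modIndec_induction with
  | subsingleton X _ =>
    exact ⟨0, Fin.elim0, fun N h hN => absurd h hN.not_isRetract_of_subsingleton⟩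
  | indec X hX => exact ⟨1, fun _ => X, fun N h hN => ⟨0, hN.nonempty_equiv_of_isRetract hX h⟩⟩
  | isCompl X K C hKC hK hC =>
    refine hK.union hC fun N hN h => ?_
    obtain ⟨i, hi⟩ := h.exists_injective
    have := isArtinian_of_injective i hi
    have := isNoetherian_of_injective i hi
    exact hN.isRetract_or_isRetract_of_prod
      (h.trans (.of_equiv (Submodule.prodEquivOfIsCompl K C hKC).symm))

theorem classRepFinite_inAdd (X : ModuleCat.{u} Λ) [IsArtinian Λ X] [IsNoetherian Λ X] :
    ClassRepFinite Λ (InAdd Λ X) := by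
  obtain ⟨k, F, hF⟩ := classRepFinite_isRetract X
  refine ⟨k, F, fun N hN hindec => hF N ?_ hindec⟩
  obtain ⟨l, h⟩ := hN
  obtain ⟨i, hi⟩ := IsRetract.exists_injective h
  have := isArtinian_of_injective i hi
  have := isNoetherian_of_injective i hi
  exact hindec.isRetract_of_arrow h

end Indecomposables

section AddMonoidEndomorphisms

variable {S : Type*} [AddCommMonoid S]

/-- The summands of multiples of `μ`. For the monoid of stable isomorphism classes and the class of
a module `M` these are the classes of the modules in `add M`. -/
def summandsOfMultiples (μ : S) : AddSubmonoid S where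
  carrier := {x | ∃ (k : ℕ) (d : S), x + d = k • μ}
  zero_mem' := ⟨0, 0, by simp⟩
  add_mem' := by
    rintro x y ⟨k, d, hx⟩ ⟨l, e, hy⟩
    exact ⟨k + l, d + e, by rw [add_add_add_comm, hx, hy, add_nsmul]⟩

theorem mem_summandsOfMultiples_of_add {μ x y : S} (h : x + y ∈ summandsOfMultiples μ) :
    x ∈ summandsOfMultiples μ := by
  obtain ⟨k, d, hd⟩ := h
  exact ⟨k, y + d, by rw [← add_assoc, hd]⟩

theorem summandsOfMultiples_le_add_right (μ ν : S) :
    summandsOfMultiples μ ≤ summandsOfMultiples (μ + ν) := by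
  rintro x ⟨k, d, hx⟩
  exact ⟨k, d + k • ν, by rw [← add_assoc, hx, nsmul_add]⟩

theorem summandsOfMultiples_le_add_left (μ ν : S) :
    summandsOfMultiples μ ≤ summandsOfMultiples (ν + μ) :=
  add_comm μ ν ▸ summandsOfMultiples_le_add_right μ ν

theorem map_mem_summandsOfMultiples {T : Type*} [AddCommMonoid T] (f : S →+ T) {μ x : S}
    (h : x ∈ summandsOfMultiples μ) : f x ∈ summandsOfMultiples (f μ) := by
  obtain ⟨k, d, hx⟩ := h
  exact ⟨k, f d, by rw [← map_add, hx, map_nsmul]⟩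

theorem pow_apply_pow_apply_comm (Ω : AddMonoid.End S) (m n : ℕ) (x : S) :
    (Ω ^ m) ((Ω ^ n) x) = (Ω ^ n) ((Ω ^ m) x) :=
  DFunLike.congr_fun (pow_mul_comm Ω m n) x

open AddMonoidAlgebra in
/- The relations `Ωⁿ x = Ωⁿ y` are detected by the kernels of the maps induced by the powers `Ωⁿ`
on the monoid algebra `ℤ[M]`, an ascending chain of ideals in a noetherian ring. -/
theorem exists_forall_pow_apply_eq_of_fg (Ω : AddMonoid.End S) {M : AddSubmonoid S} (hM : M.FG) :
    ∃ N : ℕ, ∀ x ∈ M, ∀ y ∈ M, (∃ n : ℕ, (Ω ^ n) x = (Ω ^ n) y) → (Ω ^ N) x = (Ω ^ N) y := by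
  have : AddMonoid.FG M := (AddMonoid.fg_iff_addSubmonoid_fg M).2 hM
  have : IsNoetherianRing ℤ[M] := Algebra.FiniteType.isNoetherianRing ℤ _
  let ω : S →+ S := Ω
  let iter (n : ℕ) : M →+ S := AddMonoidHom.comp (Ω ^ n) M.subtype
  let K (n : ℕ) : Ideal ℤ[M] := RingHom.ker (mapDomainRingHom ℤ (iter n))
  have mem_K (x y : M) (n : ℕ) :
      single x 1 - single y 1 ∈ K n ↔ (Ω ^ n) (x : S) = (Ω ^ n) (y : S) := by
    simp only [K, RingHom.mem_ker, map_sub, sub_eq_zero, mapDomainRingHom_apply, mapDomain_single,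
      single_left_inj one_ne_zero]
    rfl
  have K_mono : Monotone K := monotone_nat_of_le_succ fun n p hp => by
    have iter_succ : iter (n + 1) = ω.comp (iter n) := by
      simp only [iter, pow_succ']
      rfl
    rw [RingHom.mem_ker] at hp ⊢
    rw [iter_succ, mapDomainRingHom_comp, RingHom.comp_apply, hp, map_zero]
  obtain ⟨N, hN⟩ := monotone_stabilizes_iff_noetherian.2 this ⟨K, K_mono⟩
  refine ⟨N, fun x hx y hy ⟨n, hn⟩ => ?_⟩
  have h : single (⟨x, hx⟩ : M) (1 : ℤ) - single (⟨y, hy⟩ : M) 1 ∈ K (max N n) :=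
    K_mono (le_max_right N n) ((mem_K _ _ n).2 hn)
  rw [← show K N = K (max N n) from hN _ (le_max_left N n)] at h
  exact (mem_K _ _ N).1 h

end AddMonoidEndomorphisms

section StableIsomorphism

variable {Λ : Type u} [Ring Λ]
variable {X Y Z W P Q : Type u} [AddCommGroup X] [Module Λ X] [AddCommGroup Y] [Module Λ Y]
  [AddCommGroup Z] [Module Λ Z] [AddCommGroup W] [Module Λ W] [AddCommGroup P] [Module Λ P]
  [AddCommGroup Q] [Module Λ Q]

theorem exists_schanuel_equiv [Module.Projective Λ P] [Module.Projective Λ Q] {f : P →ₗ[Λ] X}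
    {g : Q →ₗ[Λ] X} (hf : Function.Surjective f) (hg : Function.Surjective g) :
    Nonempty ((LinearMap.ker f × Q) ≃ₗ[Λ] (LinearMap.ker g × P)) := by
  obtain ⟨a, ha⟩ := Module.projective_lifting_property g f hg
  obtain ⟨b, hb⟩ := Module.projective_lifting_property f g hf
  have ha' (p : P) : g (a p) = f p := LinearMap.congr_fun ha p
  have hb' (q : Q) : f (b q) = g q := LinearMap.congr_fun hb q
  refine ⟨{
    toFun x := (⟨x.2 - a (x.1 + b x.2), by simp [ha', hb']⟩, x.1 + b x.2)
    invFun y := (⟨y.2 - b (y.1 + a y.2), by simp [ha', hb']⟩, y.1 + a y.2)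
    map_add' := ?_
    map_smul' := ?_
    left_inv := ?_
    right_inv := ?_ }⟩
  · rintro ⟨⟨k, hk⟩, q⟩ ⟨⟨k', hk'⟩, q'⟩
    ext <;> simp <;> abel
  · rintro c ⟨⟨k, hk⟩, q⟩
    ext <;> simp [smul_sub, smul_add]
  · rintro ⟨⟨k, hk⟩, q⟩
    ext <;> simp
  · rintro ⟨⟨k, hk⟩, q⟩
    ext <;> simp

/-- The kernel of `f × g` is the product of the kernels of `f` and `g`. -/
def kerProdMapEquiv (f : X →ₗ[Λ] Y) (g : Z →ₗ[Λ] W) :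
    LinearMap.ker (f.prodMap g) ≃ₗ[Λ] LinearMap.ker f × LinearMap.ker g where
  toFun x := (⟨x.1.1, congrArg Prod.fst x.2⟩, ⟨x.1.2, congrArg Prod.snd x.2⟩)
  invFun y := ⟨(y.1, y.2), Prod.ext y.1.2 y.2.2⟩
  map_add' _ _ := rfl
  map_smul' _ _ := rfl
  left_inv _ := rfl
  right_inv _ := rfl

variable (Λ X Y) in
/-- Two modules are stably isomorphic if they become isomorphic after adding finitely generated
projective modules. -/
def StablyIso : Prop :=
  ∃ P Q : ModuleCat.{u} Λ, (Module.Projective Λ P ∧ Module.Finite Λ P) ∧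
    (Module.Projective Λ Q ∧ Module.Finite Λ Q) ∧ Nonempty ((X × P) ≃ₗ[Λ] (Y × Q))

namespace StablyIso

theorem of_prod_equiv [Module.Projective Λ P] [Module.Finite Λ P] [Module.Projective Λ Q]
    [Module.Finite Λ Q] (e : (X × P) ≃ₗ[Λ] (Y × Q)) : StablyIso Λ X Y :=
  ⟨.of Λ P, .of Λ Q, ⟨‹_›, ‹_›⟩, ⟨‹_›, ‹_›⟩, ⟨e⟩⟩

theorem of_equiv (e : X ≃ₗ[Λ] Y) : StablyIso Λ X Y :=
  of_prod_equiv (e.prodCongr (.refl Λ PUnit.{u + 1}))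

theorem prod_projective [Module.Projective Λ P] [Module.Finite Λ P] : StablyIso Λ (X × P) X :=
  of_prod_equiv (LinearEquiv.prodUnique : ((X × P) × PUnit.{u + 1}) ≃ₗ[Λ] X × P)

theorem symm (h : StablyIso Λ X Y) : StablyIso Λ Y X := by
  obtain ⟨P, Q, hP, hQ, ⟨e⟩⟩ := h
  exact ⟨Q, P, hQ, hP, ⟨e.symm⟩⟩

theorem trans (h : StablyIso Λ X Y) (h' : StablyIso Λ Y Z) : StablyIso Λ X Z := by
  obtain ⟨P, Q, ⟨_, _⟩, ⟨_, _⟩, ⟨e⟩⟩ := h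
  obtain ⟨P', Q', ⟨_, _⟩, ⟨_, _⟩, ⟨e'⟩⟩ := h'
  exact of_prod_equiv <| (LinearEquiv.prodAssoc Λ X P P').symm ≪≫ₗ
    e.prodCongr (.refl Λ P') ≪≫ₗ LinearEquiv.prodAssoc Λ Y Q P' ≪≫ₗ
    (LinearEquiv.refl Λ Y).prodCongr (LinearEquiv.prodComm Λ Q P') ≪≫ₗ
    (LinearEquiv.prodAssoc Λ Y P' Q).symm ≪≫ₗ e'.prodCongr (.refl Λ Q) ≪≫ₗ
    LinearEquiv.prodAssoc Λ Z Q' Q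

theorem prod (h : StablyIso Λ X Y) (h' : StablyIso Λ Z W) : StablyIso Λ (X × Z) (Y × W) := by
  obtain ⟨P, Q, ⟨_, _⟩, ⟨_, _⟩, ⟨e⟩⟩ := h
  obtain ⟨P', Q', ⟨_, _⟩, ⟨_, _⟩, ⟨e'⟩⟩ := h'
  exact of_prod_equiv <| LinearEquiv.prodProdProdComm Λ X Z P P' ≪≫ₗ e.prodCongr e' ≪≫ₗ
    LinearEquiv.prodProdProdComm Λ Y Q W Q'

theorem ker [Module.Projective Λ P] [Module.Finite Λ P] [Module.Projective Λ Q]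
    [Module.Finite Λ Q] (h : StablyIso Λ X Y) {f : P →ₗ[Λ] X} {g : Q →ₗ[Λ] Y}
    (hf : Function.Surjective f) (hg : Function.Surjective g) :
    StablyIso Λ (LinearMap.ker f) (LinearMap.ker g) := by
  obtain ⟨P', Q', ⟨_, _⟩, ⟨_, _⟩, ⟨e⟩⟩ := h
  have ker_prod_id {A B C : Type u} [AddCommGroup A] [Module Λ A] [AddCommGroup B] [Module Λ B]
      [AddCommGroup C] [Module Λ C] (f : A →ₗ[Λ] B) :
      StablyIso Λ (LinearMap.ker (f.prodMap (.id : C →ₗ[Λ] C))) (LinearMap.ker f) := by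
    have : Unique (LinearMap.ker (.id : C →ₗ[Λ] C)) := by
      rw [LinearMap.ker_id]; infer_instance
    exact of_equiv (kerProdMapEquiv f .id ≪≫ₗ LinearEquiv.prodUnique)
  have hf' : Function.Surjective (e.toLinearMap ∘ₗ f.prodMap (.id : P' →ₗ[Λ] P')) :=
    e.surjective.comp (hf.prodMap Function.surjective_id)
  have hg' : Function.Surjective (g.prodMap (.id : Q' →ₗ[Λ] Q')) :=
    hg.prodMap Function.surjective_id
  obtain ⟨schanuel⟩ := exists_schanuel_equiv hf' hg'
  rw [LinearEquiv.ker_comp] at schanuel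
  exact (ker_prod_id f).symm.trans ((of_prod_equiv schanuel).trans (ker_prod_id g))

end StablyIso

end StableIsomorphism

section StableClasses

variable (Λ : Type u) [Ring Λ]

/-- Stable isomorphism as an equivalence relation on finitely generated modules. -/
def stableSetoid : Setoid {X : ModuleCat.{u} Λ // Module.Finite Λ X} where
  r X Y := StablyIso Λ X.1 Y.1
  iseqv := ⟨fun X => .of_equiv (.refl Λ X.1), .symm, .trans⟩

/-- The stable isomorphism classes of finitely generated modules. They form a commutative monoid
under direct sum, whose zero is the class of the projective modules. -/
def StableClass : Type (u + 1) := Quotient (stableSetoid Λ)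

variable (X Y P : Type u) [AddCommGroup X] [Module Λ X] [AddCommGroup Y] [Module Λ Y]
  [AddCommGroup P] [Module Λ P]

/-- The stable isomorphism class of the finitely generated module `X`. -/
def stableClass [h : Module.Finite Λ X] : StableClass Λ :=
  Quotient.mk (stableSetoid Λ) ⟨.of Λ X, h⟩

variable {Λ X Y P}

theorem stableClass_eq_iff [Module.Finite Λ X] [Module.Finite Λ Y] :
    stableClass Λ X = stableClass Λ Y ↔ StablyIso Λ X Y := Quotient.eq (r := stableSetoid Λ)

theorem stableClass_eq_of_equiv [Module.Finite Λ X] [Module.Finite Λ Y] (e : X ≃ₗ[Λ] Y) :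
    stableClass Λ X = stableClass Λ Y := stableClass_eq_iff.2 (.of_equiv e)

theorem exists_stableClass_eq (x : StableClass Λ) :
    ∃ (X : ModuleCat.{u} Λ) (_ : Module.Finite Λ X), stableClass Λ X = x := by
  induction x using Quotient.inductionOn with
  | h X => exact ⟨X.1, X.2, rfl⟩

instance : Add (StableClass Λ) where
  add := Quotient.map₂ (fun X Y => ⟨.of Λ (X.1 × Y.1), by
    have := X.2; have := Y.2; exact (inferInstance : Module.Finite Λ (X.1 × Y.1))⟩)
    fun _ _ h _ _ h' => h.prod h'

instance : Zero (StableClass Λ) := ⟨stableClass Λ PUnit⟩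

theorem stableClass_prod [Module.Finite Λ X] [Module.Finite Λ Y] :
    stableClass Λ (X × Y) = stableClass Λ X + stableClass Λ Y := rfl

instance : AddCommMonoid (StableClass Λ) where
  add_assoc x y z := by
    obtain ⟨X, _, rfl⟩ := exists_stableClass_eq x
    obtain ⟨Y, _, rfl⟩ := exists_stableClass_eq y
    obtain ⟨Z, _, rfl⟩ := exists_stableClass_eq z
    exact stableClass_eq_of_equiv (LinearEquiv.prodAssoc Λ X Y Z)
  add_comm x y := by
    obtain ⟨X, _, rfl⟩ := exists_stableClass_eq x
    obtain ⟨Y, _, rfl⟩ := exists_stableClass_eq y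
    exact stableClass_eq_of_equiv (LinearEquiv.prodComm Λ X Y)
  zero_add x := by
    obtain ⟨X, _, rfl⟩ := exists_stableClass_eq x
    exact stableClass_eq_of_equiv LinearEquiv.uniqueProd
  add_zero x := by
    obtain ⟨X, _, rfl⟩ := exists_stableClass_eq x
    exact stableClass_eq_of_equiv LinearEquiv.prodUnique
  nsmul := nsmulRec

theorem stableClass_eq_zero_iff [Module.Finite Λ X] :
    stableClass Λ X = 0 ↔ Module.Projective Λ X := by
  refine stableClass_eq_iff.trans ⟨?_, fun _ => ?_⟩
  · rintro ⟨P, Q, -, ⟨_, _⟩, ⟨e⟩⟩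
    have : Module.Projective Λ (X × P) := .of_equiv e.symm
    exact .of_split (LinearMap.inl Λ X P) (LinearMap.fst Λ X P) (LinearMap.fst_comp_inl ..)
  · exact (StablyIso.of_equiv LinearEquiv.uniqueProd.symm).trans .prod_projective

theorem stableClass_arrow [Module.Finite Λ X] (k : ℕ) :
    stableClass Λ (Fin k → X) = k • stableClass Λ X := by
  induction k with
  | zero => rw [zero_nsmul]; exact stableClass_eq_zero_iff.2 inferInstance
  | succ k ih =>
    rw [succ_nsmul', ← ih, ← stableClass_prod]
    exact (stableClass_eq_of_equiv (Fin.consLinearEquiv Λ (fun _ => X))).symm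

theorem IsRetract.exists_stableClass_add_eq [Module.Finite Λ X] [Module.Finite Λ Y]
    (h : IsRetract Λ X Y) : ∃ d, stableClass Λ X + d = stableClass Λ Y := by
  obtain ⟨D, ⟨e⟩⟩ := h.exists_prod_equiv
  have : Module.Finite Λ D := (IsRetract.trans .inr (.of_equiv e)).finite
  exact ⟨stableClass Λ D, stableClass_eq_of_equiv e⟩

theorem InAdd.stableClass_mem {N X : ModuleCat.{u} Λ} [Module.Finite Λ N] [Module.Finite Λ X]
    (h : InAdd Λ N X) : stableClass Λ X ∈ summandsOfMultiples (stableClass Λ N) := by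
  obtain ⟨k, h⟩ := h
  obtain ⟨d, hd⟩ := IsRetract.exists_stableClass_add_eq h
  exact ⟨k, d, hd.trans (stableClass_arrow k)⟩

/- The summand `Λ` accounts for the projective summands that stable classes do not see. -/
theorem inAdd_of_stableClass_mem [Module.Finite Λ X] [Module.Finite Λ Y]
    (h : stableClass Λ X ∈ summandsOfMultiples (stableClass Λ Y)) :
    InAdd Λ (.of Λ (Y × Λ)) (.of Λ X) := by
  obtain ⟨k, d, hd⟩ := h
  obtain ⟨D, _, rfl⟩ := exists_stableClass_eq d
  rw [← stableClass_arrow, ← stableClass_prod, stableClass_eq_iff] at hd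
  obtain ⟨P, Q, -, ⟨_, _⟩, ⟨e⟩⟩ := hd
  obtain ⟨n, f, hf⟩ := Module.Finite.exists_fin' Λ Q
  have hX : IsRetract Λ X ((Fin k → Y) × Q) :=
    (IsRetract.inl (Y := D)).trans (IsRetract.inl.trans (.of_equiv e))
  have hQ : IsRetract Λ Q (Fin n → Λ) :=
    (Module.projective_lifting_property f .id hf).imp fun _ h => ⟨f, h⟩
  have hYQ : IsRetract Λ ((Fin k → Y) × Q) ((Fin k → Y × Λ) × (Fin n → Y × Λ)) :=
    .prodMap (.arrow _ .inl) (hQ.trans (.arrow _ .inr))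
  exact ⟨k + n, hX.trans <| hYQ.trans <| .of_equiv <|
    (LinearEquiv.sumArrowLequivProdArrow (Fin k) (Fin n) Λ (Y × Λ)).symm ≪≫ₗ
      LinearEquiv.funCongrLeft Λ (Y × Λ) finSumFinEquiv.symm⟩

end StableClasses

section Syzygies

variable {Λ : Type u} [Ring Λ] [IsNoetherianRing Λ]
variable {X Y Z P : Type u} [AddCommGroup X] [Module Λ X] [Module.Finite Λ X]
  [AddCommGroup Y] [Module Λ Y] [AddCommGroup Z] [Module Λ Z]
  [AddCommGroup P] [Module Λ P] [Module.Projective Λ P] [Module.Finite Λ P]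

theorem exists_stableClass_ker_eq (x : StableClass Λ) : ∃ y : StableClass Λ,
    ∀ (X P : ModuleCat.{u} Λ) [Module.Finite Λ X] [Module.Projective Λ P] [Module.Finite Λ P]
      (g : P →ₗ[Λ] X), Function.Surjective g → stableClass Λ X = x →
      stableClass Λ (LinearMap.ker g) = y := by
  obtain ⟨X, _, rfl⟩ := exists_stableClass_eq x
  obtain ⟨n, f, hf⟩ := Module.Finite.exists_fin' Λ X
  exact ⟨stableClass Λ (LinearMap.ker f), fun Y P _ _ _ g hg h =>
    stableClass_eq_iff.2 (.ker (stableClass_eq_iff.1 h) hg hf)⟩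

variable (Λ) in
/-- The syzygy operator on stable isomorphism classes. Kernels of any epimorphisms from finitely
generated projective modules are allowed: they agree with minimal syzygies up to projective
summands. -/
noncomputable def syzygy : AddMonoid.End (StableClass Λ) where
  toFun x := (exists_stableClass_ker_eq x).choose
  map_zero' := by
    refine ((exists_stableClass_ker_eq 0).choose_spec (.of Λ PUnit) (.of Λ PUnit) .id
      Function.surjective_id rfl).symm.trans (stableClass_eq_zero_iff.2 ?_)
    rw [LinearMap.ker_id]
    infer_instance
  map_add' x y := by
    obtain ⟨X, _, rfl⟩ := exists_stableClass_eq x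
    obtain ⟨Y, _, rfl⟩ := exists_stableClass_eq y
    obtain ⟨m, f, hf⟩ := Module.Finite.exists_fin' Λ X
    obtain ⟨n, g, hg⟩ := Module.Finite.exists_fin' Λ Y
    rw [← (exists_stableClass_ker_eq _).choose_spec X (.of Λ (Fin m → Λ)) f hf rfl,
      ← (exists_stableClass_ker_eq _).choose_spec Y (.of Λ (Fin n → Λ)) g hg rfl,
      ← (exists_stableClass_ker_eq _).choose_spec (.of Λ (X × Y))
        (.of Λ ((Fin m → Λ) × (Fin n → Λ))) (f.prodMap g) (hf.prodMap hg) stableClass_prod]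
    exact stableClass_eq_of_equiv (kerProdMapEquiv f g)

theorem syzygy_stableClass {g : P →ₗ[Λ] X} (hg : Function.Surjective g) :
    syzygy Λ (stableClass Λ X) = stableClass Λ (LinearMap.ker g) :=
  ((exists_stableClass_ker_eq _).choose_spec (.of Λ X) (.of Λ P) g hg rfl).symm

theorem syzygy_pow_stableClass {g : P →ₗ[Λ] X} (hg : Function.Surjective g) (n : ℕ) :
    (syzygy Λ ^ (n + 1)) (stableClass Λ X) = (syzygy Λ ^ n) (stableClass Λ (LinearMap.ker g)) := by
  rw [← syzygy_stableClass hg, pow_succ]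
  rfl

theorem projDimLE_iff_syzygy_pow_eq_zero {M : ModuleCat.{u} Λ} [Module.Finite Λ M] {n : ℕ} :
    ProjDimLE Λ n M ↔ (syzygy Λ ^ n) (stableClass Λ M) = 0 := by
  induction n generalizing M with
  | zero => exact stableClass_eq_zero_iff.symm
  | succ n ih =>
    constructor
    · rintro ⟨P, g, _, _, hg, hker⟩
      rw [syzygy_pow_stableClass hg]
      exact ih.1 hker
    · intro h
      obtain ⟨k, g, hg⟩ := Module.Finite.exists_fin' Λ M
      rw [syzygy_pow_stableClass hg] at h
      exact ⟨.of Λ (Fin k → Λ), g, inferInstanceAs (Module.Projective Λ (Fin k → Λ)),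
        inferInstanceAs (Module.Finite Λ (Fin k → Λ)), hg, ih.2 h⟩

theorem projDimLT_iff_syzygy_pow_eq_zero {n : ℕ} :
    ProjDimLT Λ X (n + 1) ↔ (syzygy Λ ^ n) (stableClass Λ X) = 0 := by
  induction n generalizing X with
  | zero => exact projDimLT_one_iff.trans stableClass_eq_zero_iff.symm
  | succ n ih =>
    obtain ⟨k, g, hg⟩ := Module.Finite.exists_fin' Λ X
    have hfree : ProjDimLT Λ (Fin k → Λ) 1 := projDimLT_one_iff.2 inferInstance
    rw [syzygy_pow_stableClass hg, ← ih]
    exact ⟨(isSES_ker_subtype hg).projDimLT_left (hfree.mono (by lia)),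
      fun h => (isSES_ker_subtype hg).projDimLT_right h (hfree.mono (by lia))⟩

theorem exists_projDimLT_iff_syzygy_pow_eq_zero :
    (∃ n, ProjDimLT Λ X n) ↔ ∃ n, (syzygy Λ ^ n) (stableClass Λ X) = 0 :=
  ⟨fun ⟨n, h⟩ => ⟨n, projDimLT_iff_syzygy_pow_eq_zero.1 (h.mono n.le_succ)⟩,
    fun ⟨n, h⟩ => ⟨n + 1, projDimLT_iff_syzygy_pow_eq_zero.2 h⟩⟩

end Syzygies

section ClassesOfSummands

variable {Λ : Type u} [Ring Λ]

variable (Λ) in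
/-- The stable classes of the finitely generated indecomposable modules in `add M`. -/
def indecClasses (M : ModuleCat.{u} Λ) : Set (StableClass Λ) :=
  {x | ∃ (N : ModuleCat.{u} Λ) (_ : Module.Finite Λ N),
    InAdd Λ M N ∧ ModIndec Λ N ∧ stableClass Λ N = x}

theorem finite_indecClasses (M : ModuleCat.{u} Λ) [IsArtinian Λ M] [IsNoetherian Λ M] :
    (indecClasses Λ M).Finite := by
  obtain ⟨k, F, hF⟩ := classRepFinite_inAdd M
  have hfin (i : Fin k) :
      {x : StableClass Λ | ∃ _ : Module.Finite Λ (F i), stableClass Λ (F i) = x}.Finite :=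
    Set.Subsingleton.finite fun _ ⟨_, hx⟩ _ ⟨_, hy⟩ => hx.symm.trans hy
  refine (Set.finite_iUnion hfin).subset ?_
  rintro _ ⟨N, _, hN, hindec, rfl⟩
  obtain ⟨i, ⟨e⟩⟩ := hF N hN hindec
  have : Module.Finite Λ (F i) := .equiv e
  exact Set.mem_iUnion.2 ⟨i, this, (stableClass_eq_of_equiv e).symm⟩

theorem InAdd.stableClass_mem_closure {M X : ModuleCat.{u} Λ} [hfin : Module.Finite Λ X]
    [IsArtinian Λ X] [IsNoetherian Λ X] (h : InAdd Λ M X) :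
    stableClass Λ X ∈ AddSubmonoid.closure (indecClasses Λ M) := by
  refine modIndec_induction (motive := fun X => ∀ _ : Module.Finite Λ X, InAdd Λ M X →
    stableClass Λ X ∈ AddSubmonoid.closure (indecClasses Λ M)) ?_ ?_ ?_ X hfin h
  · intro X _ _ _
    rw [stableClass_eq_zero_iff.2 (Module.Projective.of_free : Module.Projective Λ X)]
    exact zero_mem _
  · exact fun X hX _ h => AddSubmonoid.subset_closure ⟨X, ‹_›, h, hX, rfl⟩
  · rintro X _ _ K C hKC hK hC _ ⟨k, h⟩
    rw [← stableClass_eq_of_equiv (Submodule.prodEquivOfIsCompl K C hKC), stableClass_prod]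
    exact add_mem (hK inferInstance ⟨k, (IsRetract.of_isCompl hKC).trans h⟩)
      (hC inferInstance ⟨k, (IsRetract.of_isCompl hKC.symm).trans h⟩)

theorem fg_summandsOfMultiples [IsArtinianRing Λ] (μ : StableClass Λ) :
    (summandsOfMultiples μ).FG := by
  obtain ⟨Y, _, rfl⟩ := exists_stableClass_eq μ
  have hfin : Module.Finite Λ (ModuleCat.of Λ (Y × Λ)) := inferInstanceAs (Module.Finite Λ (Y × Λ))
  have hYΛ : stableClass Λ (ModuleCat.of Λ (Y × Λ)) = stableClass Λ Y :=
    stableClass_eq_iff.2 .prod_projective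
  refine AddSubmonoid.fg_iff _ |>.2 ⟨indecClasses Λ (.of Λ (Y × Λ)), le_antisymm ?_ ?_,
    finite_indecClasses _⟩
  · refine AddSubmonoid.closure_le.2 ?_
    rintro _ ⟨N, _, hN, -, rfl⟩
    exact hYΛ ▸ hN.stableClass_mem
  · intro x hx
    obtain ⟨X, _, rfl⟩ := exists_stableClass_eq x
    exact (inAdd_of_stableClass_mem hx).stableClass_mem_closure

end ClassesOfSummands

section ExactTriples

variable {Λ : Type u} [Ring Λ]

namespace IsSES

variable {X Y Z F : Type u} [AddCommGroup X] [Module Λ X] [AddCommGroup Y] [Module Λ Y]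
  [AddCommGroup Z] [Module Λ Z] [AddCommGroup F] [Module Λ F]
  {f : X →ₗ[Λ] Y} {g : Y →ₗ[Λ] Z} {r : F →ₗ[Λ] Y}

theorem surjective_coprod (h : IsSES f g) (hr : Function.Surjective (g ∘ₗ r)) :
    Function.Surjective (f.coprod r) := by
  intro y
  obtain ⟨v, hv⟩ := hr (g y)
  obtain ⟨x, hx⟩ := (h.exact (y - r v)).1 (by rw [map_sub, ← hv, LinearMap.comp_apply, sub_self])
  exact ⟨(x, v), by simp [hx]⟩

theorem nonempty_ker_coprod_equiv (h : IsSES f g) (r : F →ₗ[Λ] Y) :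
    Nonempty (LinearMap.ker (f.coprod r) ≃ₗ[Λ] LinearMap.ker (g ∘ₗ r)) := by
  have hgf (x : X) : g (f x) = 0 := h.exact.apply_apply_eq_zero x
  have hmaps (x : X × F) (hx : x ∈ LinearMap.ker (f.coprod r)) :
      LinearMap.snd Λ X F x ∈ LinearMap.ker (g ∘ₗ r) := by
    simpa [hgf] using congrArg g (LinearMap.mem_ker.1 hx)
  refine ⟨.ofBijective ((LinearMap.snd Λ X F).restrict hmaps) ⟨?_, ?_⟩⟩
  · refine (injective_iff_map_eq_zero _).2 ?_
    rintro ⟨⟨x, v⟩, hx⟩ hv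
    obtain rfl : v = 0 := congrArg Subtype.val hv
    obtain rfl : x = 0 := h.injective (by simpa using hx)
    rfl
  · rintro ⟨v, hv⟩
    obtain ⟨x, hx⟩ := (h.exact (r v)).1 hv
    exact ⟨⟨(-x, v), by simp [hx]⟩, rfl⟩

end IsSES

/-- `ExactTriple x y z`: some short exact sequence `0 → X → Y → Z → 0` of finitely generated modules
has terms in the stable classes `x`, `y`, `z`. -/
inductive ExactTriple : StableClass Λ → StableClass Λ → StableClass Λ → Prop
  | of_isSES {X Y Z : Type u} [AddCommGroup X] [Module Λ X] [Module.Finite Λ X]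
      [AddCommGroup Y] [Module Λ Y] [Module.Finite Λ Y]
      [AddCommGroup Z] [Module Λ Z] [Module.Finite Λ Z] {f : X →ₗ[Λ] Y} {g : Y →ₗ[Λ] Z} :
      IsSES f g → ExactTriple (stableClass Λ X) (stableClass Λ Y) (stableClass Λ Z)

namespace ExactTriple

variable {x y z : StableClass Λ}

theorem eq_of_right_eq_zero (h : ExactTriple x y z) (hz : z = 0) : x = y := by
  obtain @⟨X, Y, Z, _, _, _, _, _, _, _, _, _, f, g, h⟩ := h
  have := stableClass_eq_zero_iff.1 hz
  obtain ⟨s, hs⟩ := Module.projective_lifting_property g .id h.surjective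
  have e := (h.exact.splitSurjectiveEquiv h.injective ⟨s, hs⟩).1
  rw [stableClass_eq_of_equiv e, stableClass_prod, hz, add_zero]

variable [IsNoetherianRing Λ]

theorem rotate (h : ExactTriple x y z) : ExactTriple (syzygy Λ z) x y := by
  obtain @⟨X, Y, Z, _, _, _, _, _, _, _, _, _, f, g, h⟩ := h
  obtain ⟨n, q, hq⟩ := Module.Finite.exists_fin' Λ Z
  obtain ⟨r, rfl⟩ := Module.projective_lifting_property g q h.surjective
  obtain ⟨e⟩ := h.nonempty_ker_coprod_equiv r
  rw [syzygy_stableClass hq, ← stableClass_eq_of_equiv e,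
    ← stableClass_eq_iff.2 (StablyIso.prod_projective (X := X) (P := Fin n → Λ))]
  exact of_isSES (isSES_ker_subtype (h.surjective_coprod hq))

theorem map_syzygy (h : ExactTriple x y z) : ExactTriple (syzygy Λ x) (syzygy Λ y) (syzygy Λ z) :=
  h.rotate.rotate.rotate

theorem map_syzygy_pow (h : ExactTriple x y z) (n : ℕ) :
    ExactTriple ((syzygy Λ ^ n) x) ((syzygy Λ ^ n) y) ((syzygy Λ ^ n) z) := by
  induction n with
  | zero => exact h
  | succ n ih =>
    rw [pow_succ']
    exact ih.map_syzygy

theorem syzygy_pow_eq (h : ExactTriple x y z) {n : ℕ} (hz : (syzygy Λ ^ n) z = 0) :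
    (syzygy Λ ^ n) x = (syzygy Λ ^ n) y :=
  (h.map_syzygy_pow n).eq_of_right_eq_zero hz

theorem syzygy_pow_right_eq_zero [IsArtinianRing Λ] (h : ExactTriple x y z) (hxy : x = y) {n : ℕ}
    (hn : ∀ u v : StableClass Λ, u + v = x → (∃ r, (syzygy Λ ^ r) u = 0) →
      (syzygy Λ ^ n) u = 0)
    (hz : ∃ r, (syzygy Λ ^ r) z = 0) : (syzygy Λ ^ (n + 3)) z = 0 := by
  obtain @⟨X, Y, Z, _, _, _, _, _, _, _, _, _, f, g, h⟩ := h
  obtain ⟨Q, P, ⟨_, _⟩, ⟨_, _⟩, ⟨e⟩⟩ := stableClass_eq_iff.1 hxy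
  refine projDimLT_iff_syzygy_pow_eq_zero.1 (h.projDimLT_of_stablyIso e (fun K C hKC hK => ?_)
    (exists_projDimLT_iff_syzygy_pow_eq_zero.2 hz))
  have hsum : stableClass Λ K + stableClass Λ C = stableClass Λ X := by
    rw [← stableClass_prod, stableClass_eq_of_equiv (Submodule.prodEquivOfIsCompl K C hKC)]
    exact stableClass_eq_iff.2 .prod_projective
  exact projDimLT_iff_syzygy_pow_eq_zero.2
    (hn _ _ hsum (exists_projDimLT_iff_syzygy_pow_eq_zero.1 hK))

end ExactTriple

theorem exists_forall_syzygy_pow_eq_zero [IsArtinianRing Λ] (μ : StableClass Λ) :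
    ∃ n, ∀ x ∈ summandsOfMultiples μ, (∃ r, (syzygy Λ ^ r) x = 0) → (syzygy Λ ^ n) x = 0 := by
  obtain ⟨n, hn⟩ := exists_forall_pow_apply_eq_of_fg (syzygy Λ) (fg_summandsOfMultiples μ)
  refine ⟨n, fun x hx hr => ?_⟩
  simpa only [map_zero] using hn x hx 0 (zero_mem _) (by simpa only [map_zero] using hr)

theorem exists_forall_exactTriple_syzygy_pow_eq_zero [IsArtinianRing Λ] (μ : StableClass Λ) :
    ∃ n, ∀ x y z : StableClass Λ, ExactTriple x y z → x ∈ summandsOfMultiples μ →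
      y ∈ summandsOfMultiples μ → (∃ r, (syzygy Λ ^ r) z = 0) → (syzygy Λ ^ n) z = 0 := by
  obtain ⟨m, hm⟩ := exists_forall_pow_apply_eq_of_fg (syzygy Λ) (fg_summandsOfMultiples μ)
  obtain ⟨n, hn⟩ := exists_forall_syzygy_pow_eq_zero ((syzygy Λ ^ m) μ)
  refine ⟨n + 3 + m, fun x y z h hx hy ⟨r, hr⟩ => ?_⟩
  have hxy : (syzygy Λ ^ m) x = (syzygy Λ ^ m) y := hm x hx y hy ⟨r, h.syzygy_pow_eq hr⟩
  have hz : (syzygy Λ ^ r) ((syzygy Λ ^ m) z) = 0 := by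
    rw [pow_apply_pow_apply_comm, hr, map_zero]
  rw [pow_add]
  refine (h.map_syzygy_pow m).syzygy_pow_right_eq_zero hxy (fun u v huv => hn u ?_) ⟨r, hz⟩
  exact mem_summandsOfMultiples_of_add (huv ▸ map_mem_summandsOfMultiples _ hx)

end ExactTriples

section MinimalSyzygies

variable {Λ : Type u} [Ring Λ]

/- Lifting `g` through its restriction to `L` gives an endomorphism of `P` over `M` with image in
`L`; Fitting's lemma splits `P` along a power of it. -/
theorem exists_isCompl_surjective_comp_subtype {P M : Type*} [AddCommGroup P] [Module Λ P]
    [Module.Projective Λ P] [IsArtinian Λ P] [IsNoetherian Λ P] [AddCommGroup M] [Module Λ M]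
    {g : P →ₗ[Λ] M} (hg : Function.Surjective g) {L : Submodule Λ P}
    (hL : L ⊔ LinearMap.ker g = ⊤) :
    ∃ K C : Submodule Λ P, IsCompl K C ∧ K ≤ L ∧ Function.Surjective (g ∘ₗ K.subtype) := by
  have hgL : Function.Surjective (g ∘ₗ L.subtype) := by
    rw [← LinearMap.range_eq_top, LinearMap.range_comp, Submodule.range_subtype,
      ← LinearMap.range_eq_top.2 hg, ← Submodule.map_top, ← hL, Submodule.map_sup,
      (LinearMap.le_ker_iff_map (f := g)).1 le_rfl, sup_bot_eq]
  obtain ⟨h, hh⟩ := Module.projective_lifting_property (g ∘ₗ L.subtype) g hgL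
  let e : Module.End Λ P := L.subtype ∘ₗ h
  have hge (k : ℕ) : g ∘ₗ e ^ k = g := by
    induction k with
    | zero => rfl
    | succ k ih => rw [pow_succ, Module.End.mul_eq_comp, ← LinearMap.comp_assoc, ih]; exact hh
  obtain ⟨k, hk⟩ := Filter.eventually_atTop.1 e.eventually_isCompl_ker_pow_range_pow
  refine ⟨LinearMap.range (e ^ (k + 1)), LinearMap.ker (e ^ (k + 1)),
    (hk (k + 1) (Nat.le_succ k)).symm, ?_, fun x => ?_⟩
  · rintro _ ⟨p, rfl⟩
    rw [pow_succ']
    exact (h ((e ^ k) p)).2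
  · obtain ⟨p, rfl⟩ := hg x
    exact ⟨⟨(e ^ (k + 1)) p, p, rfl⟩, LinearMap.congr_fun (hge (k + 1)) p⟩

theorem exists_isSuperfluous_ker {P M : ModuleCat.{u} Λ} [hP : Module.Projective Λ P]
    [hfin : Module.Finite Λ P] [IsArtinian Λ P] [IsNoetherian Λ P] {g : P →ₗ[Λ] M}
    (hg : Function.Surjective g) :
    ∃ (P : ModuleCat.{u} Λ) (g : P →ₗ[Λ] M), Module.Projective Λ P ∧ Module.Finite Λ P ∧
      Function.Surjective g ∧ IsSuperfluous Λ (LinearMap.ker g) := by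
  induction hl : Module.length Λ P using WellFoundedLT.induction generalizing P with
  | _ l ih =>
    by_cases hs : IsSuperfluous Λ (LinearMap.ker g)
    · exact ⟨P, g, hP, hfin, hg, hs⟩
    obtain ⟨L, hL, hL'⟩ : ∃ L : Submodule Λ P, L ⊔ LinearMap.ker g = ⊤ ∧ L ≠ ⊤ := by
      simpa [IsSuperfluous] using hs
    obtain ⟨K, C, hKC, hKL, hgK⟩ := exists_isCompl_surjective_comp_subtype hg hL
    obtain ⟨i, p, hp⟩ := IsRetract.of_isCompl hKC
    exact ih _ (hl ▸ Submodule.length_lt (ne_top_of_le_ne_top hL' hKL)) (P := .of Λ K)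
      (hP := .of_split i p hp) (hfin := IsRetract.finite ⟨i, p, hp⟩) (g := g ∘ₗ K.subtype) hgK rfl

variable [IsArtinianRing Λ]

theorem exists_isSyzygyOf (M : ModuleCat.{u} Λ) [Module.Finite Λ M] :
    ∃ (K : ModuleCat.{u} Λ) (_ : Module.Finite Λ K), IsSyzygyOf Λ K M ∧
      stableClass Λ K = syzygy Λ (stableClass Λ M) := by
  obtain ⟨n, f, hf⟩ := Module.Finite.exists_fin' Λ M
  obtain ⟨P, g, hP, hfin, hg, hs⟩ := exists_isSuperfluous_ker (P := .of Λ (Fin n → Λ)) hf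
  exact ⟨.of Λ (LinearMap.ker g), inferInstanceAs (Module.Finite Λ (LinearMap.ker g)),
    ⟨P, g, hP, hfin, hg, hs, ⟨.refl Λ _⟩⟩, (syzygy_stableClass hg).symm⟩

theorem exists_isNthSyzygy (M : ModuleCat.{u} Λ) [hM : Module.Finite Λ M] (n : ℕ) :
    ∃ (K : ModuleCat.{u} Λ) (_ : Module.Finite Λ K), IsNthSyzygy Λ n K M ∧
      stableClass Λ K = (syzygy Λ ^ n) (stableClass Λ M) := by
  induction n with
  | zero => exact ⟨M, hM, ⟨.refl Λ M⟩, rfl⟩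
  | succ n ih =>
    obtain ⟨K', _, hK', hK'M⟩ := ih
    obtain ⟨K, hfin, hK, hKK'⟩ := exists_isSyzygyOf K'
    refine ⟨K, hfin, ⟨K', hK', hK⟩, ?_⟩
    rw [hKK', hK'M, pow_succ']
    rfl

theorem MSyzygyFiniteClass.exists_syzygy_pow_mem {m : ℕ} {C : ModuleCat.{u} Λ → Prop}
    (h : MSyzygyFiniteClass Λ m C) : ∃ ν : StableClass Λ,
      ∀ (X : ModuleCat.{u} Λ) [Module.Finite Λ X], C X →
        (syzygy Λ ^ m) (stableClass Λ X) ∈ summandsOfMultiples ν := by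
  obtain ⟨N, hN, h⟩ := h
  refine ⟨stableClass Λ N, fun X _ hX => ?_⟩
  obtain ⟨K, _, hK, hKX⟩ := exists_isNthSyzygy X m
  exact hKX ▸ (h X hX K hK).stableClass_mem

end MinimalSyzygies

section FirstSyzygies

variable {Λ : Type u} [Ring Λ] [IsNoetherianRing Λ]

theorem finFinDim_of_forall_submodule {V : Type u} [AddCommGroup V] [Module Λ V]
    {φ : Λ →ₗ[Λ] V} (hφ : Function.Injective φ) {n : ℕ}
    (h : ∀ (k : ℕ) (X : Submodule Λ (Fin k → V)) [Module.Finite Λ X],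
      (∃ r, (syzygy Λ ^ r) (stableClass Λ X) = 0) → (syzygy Λ ^ n) (stableClass Λ X) = 0) :
    FinFinDim Λ := by
  refine ⟨n + 1, fun M _ ⟨r, hr⟩ => projDimLE_iff_syzygy_pow_eq_zero.2 ?_⟩
  obtain ⟨k, p, hp⟩ := Module.Finite.exists_fin' Λ M
  have hφk : Function.Injective (φ.compLeft (Fin k)) := hφ.comp_left
  let e := Submodule.equivMapOfInjective (φ.compLeft (Fin k)) hφk (LinearMap.ker p)
  have : Module.Finite Λ ((LinearMap.ker p).map (φ.compLeft (Fin k))) := .equiv e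
  rw [syzygy_pow_stableClass hp, stableClass_eq_of_equiv e]
  refine h k _ ⟨r, ?_⟩
  rw [← stableClass_eq_of_equiv e, ← syzygy_pow_stableClass hp, pow_succ']
  exact (congrArg (syzygy Λ) (projDimLE_iff_syzygy_pow_eq_zero.1 hr)).trans (map_zero _)

theorem OneSyzygyFinite.exists_inAdd_submodule [IsArtinianRing Λ] (h : OneSyzygyFinite Λ) :
    ∃ (N : ModuleCat.{u} Λ) (_ : Module.Finite Λ N),
      ∀ (n : ℕ) (Y : Submodule Λ (Fin n → Λ)), InAdd Λ N (.of Λ Y) := by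
  obtain ⟨ν, hν⟩ := MSyzygyFiniteClass.exists_syzygy_pow_mem h
  obtain ⟨N, _, rfl⟩ := exists_stableClass_eq ν
  refine ⟨.of Λ (N × Λ), inferInstanceAs (Module.Finite Λ (N × Λ)), fun n Y => ?_⟩
  have hquot : Module.Finite Λ (ModuleCat.of Λ ((Fin n → Λ) ⧸ Y)) :=
    inferInstanceAs (Module.Finite Λ ((Fin n → Λ) ⧸ Y))
  have hY : syzygy Λ (stableClass Λ ((Fin n → Λ) ⧸ Y)) = stableClass Λ Y :=
    (syzygy_stableClass Y.mkQ_surjective).trans (stableClass_eq_of_equiv (.ofEq _ _ Y.ker_mkQ))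
  have hmem := hν (.of Λ ((Fin n → Λ) ⧸ Y)) hquot
  rw [pow_one] at hmem
  exact inAdd_of_stableClass_mem (hY ▸ hmem)

end FirstSyzygies

section Subalgebras

theorem IsRetract.restrictScalars {Γ : Type*} [Ring Γ] (B : Type*) [Ring B] {X Y : Type*}
    [AddCommGroup X] [Module Γ X] [AddCommGroup Y] [Module Γ Y] [Module B X] [Module B Y]
    [LinearMap.CompatibleSMul X Y B Γ] [LinearMap.CompatibleSMul Y X B Γ]
    (h : IsRetract Γ X Y) : IsRetract B X Y := by
  obtain ⟨i, p, hp⟩ := h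
  exact ⟨i.restrictScalars B, p.restrictScalars B,
    LinearMap.ext fun x => LinearMap.congr_fun hp x⟩

/-- The largest `Γ`-submodule contained in a subgroup `X` of a `Γ`-module, where `X` is given as a
submodule over another ring `B`. -/
def submoduleCore (Γ : Type*) [Ring Γ] {B W : Type*} [Ring B] [AddCommGroup W] [Module Γ W]
    [Module B W] (X : Submodule B W) : Submodule Γ W where
  carrier := {w | ∀ a : Γ, a • w ∈ X}
  zero_mem' a := by simp
  add_mem' hv hw a := by
    rw [smul_add]
    exact add_mem (hv a) (hw a)
  smul_mem' b w hw a := by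
    rw [smul_smul]
    exact hw (a * b)

variable {k Γ : Type u} [CommRing k] [Ring Γ] [Algebra k Γ] {B : Subalgebra k Γ}

theorem restrictScalars_submoduleCore_le {W : Type*} [AddCommGroup W] [Module Γ W]
    (X : Submodule B W) : (submoduleCore Γ X).restrictScalars B ≤ X :=
  fun w hw => one_smul Γ w ▸ hw 1

theorem smul_mem_submoduleCore {I : Set Γ} (hIB : I ⊆ B) (hΓI : ∀ a : Γ, ∀ x ∈ I, a * x ∈ I)
    {W : Type*} [AddCommGroup W] [Module Γ W] {X : Submodule B W} {b : B} (hb : (b : Γ) ∈ I)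
    {w : W} (hw : w ∈ X) : b • w ∈ submoduleCore Γ X := by
  intro a
  rw [Subalgebra.smul_def, smul_smul]
  exact X.smul_mem ⟨a * b, hIB (hΓI a b hb)⟩ hw

theorem exists_isSES_of_subset {I : Set Γ} (hIB : I ⊆ B) (hΓI : ∀ a : Γ, ∀ x ∈ I, a * x ∈ I)
    {W : Type u} [AddCommGroup W] [Module Γ W] (X : Submodule B W) :
    ∃ (Y : Submodule Γ W) (Z : ModuleCat.{u} B) (f : Y →ₗ[B] X) (g : X →ₗ[B] Z),
      IsSES f g ∧ ∀ b : B, (b : Γ) ∈ I → ∀ z : Z, b • z = 0 := by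
  have hle := restrictScalars_submoduleCore_le X
  let f : submoduleCore Γ X →ₗ[B] X := Submodule.inclusion hle
  refine ⟨submoduleCore Γ X, .of B (X ⧸ LinearMap.range f), f, (LinearMap.range f).mkQ,
    ⟨Submodule.inclusion_injective hle, LinearMap.exact_map_mkQ_range f,
      Submodule.mkQ_surjective _⟩, fun b hb z => ?_⟩
  obtain ⟨x, rfl⟩ := Submodule.mkQ_surjective _ z
  rw [← map_smul, Submodule.mkQ_apply, Submodule.Quotient.mk_eq_zero]
  exact ⟨⟨b • x, smul_mem_submoduleCore hIB hΓI hb x.2⟩, rfl⟩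

theorem OneSyzygyFinite.exists_stableClass_restrictScalars_mem [IsArtinianRing Γ]
    [Module.Finite B Γ] (h : OneSyzygyFinite Γ) :
    ∃ ν : StableClass B, ∀ (n : ℕ) (Y : Submodule Γ (Fin n → Γ)) [Module.Finite B Y],
      stableClass B Y ∈ summandsOfMultiples ν := by
  obtain ⟨N, _, hN⟩ := h.exists_inAdd_submodule
  have : Module.Finite B N := .trans Γ N
  refine ⟨stableClass B N, fun n Y _ => ?_⟩
  obtain ⟨m, hY⟩ := hN n Y
  exact InAdd.stableClass_mem (X := .of B Y) (N := .of B N)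
    ⟨m, IsRetract.restrictScalars (Γ := Γ) (X := Y) (Y := Fin m → N) B hY⟩

/- A submodule of a free `B`-module is an extension of an `I`-torsion module by a submodule of a
free `Γ`-module. Rotating this triple by a syzygy gives one whose first two terms are eventually
controlled by finitely many modules. -/
theorem finFinDim_of_subset [IsArtinianRing B] [Module.Finite B Γ] {I : Set Γ} (hIB : I ⊆ B)
    (hΓI : ∀ a : Γ, ∀ x ∈ I, a * x ∈ I) (hΓ : OneSyzygyFinite Γ)
    (hB : SyzygyFiniteClass B fun X => Module.Finite B X ∧
      ∀ b : B, (b : Γ) ∈ I → ∀ z : X, b • z = 0) : FinFinDim B := by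
  have : IsArtinianRing Γ := isArtinian_of_tower B inferInstance
  obtain ⟨m, hm⟩ := hB
  obtain ⟨ν, hν⟩ := hm.exists_syzygy_pow_mem
  obtain ⟨ξ, hξ⟩ := hΓ.exists_stableClass_restrictScalars_mem (B := B)
  obtain ⟨n, hn⟩ := exists_forall_exactTriple_syzygy_pow_eq_zero
    (syzygy B ν + (syzygy B ^ m) ξ)
  have hincl : Function.Injective (LinearMap.toSpanSingleton B Γ 1) := fun b c hbc =>
    Subtype.ext (by simpa [Subalgebra.smul_def] using hbc)
  refine finFinDim_of_forall_submodule hincl (n := n + m) fun k X _ ⟨r, hr⟩ => ?_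
  obtain ⟨Y, Z, f, g, h, hZ⟩ := exists_isSES_of_subset hIB hΓI X
  have : Module.Finite B Z := .of_surjective g h.surjective
  have : Module.Finite B Y := .of_injective f h.injective
  have hΩZ : (syzygy B ^ m) (syzygy B (stableClass B Z)) ∈ summandsOfMultiples (syzygy B ν) := by
    have hcomm := pow_apply_pow_apply_comm (syzygy B) m 1 (stableClass B Z)
    rw [pow_one] at hcomm
    rw [hcomm]
    exact map_mem_summandsOfMultiples _ (hν Z ⟨‹_›, hZ⟩)
  have hΩY : (syzygy B ^ m) (stableClass B Y) ∈ summandsOfMultiples ((syzygy B ^ m) ξ) :=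
    map_mem_summandsOfMultiples _ (hξ k Y)
  have hΩX : (syzygy B ^ r) ((syzygy B ^ m) (stableClass B X)) = 0 := by
    rw [pow_apply_pow_apply_comm, hr, map_zero]
  rw [pow_add]
  exact hn _ _ _ ((ExactTriple.of_isSES h).rotate.map_syzygy_pow m)
    (summandsOfMultiples_le_add_right _ _ hΩZ) (summandsOfMultiples_le_add_left _ _ hΩY) ⟨r, hΩX⟩

end Subalgebras

section Chains

open Pointwise

theorem mul_mem_prod_ofFn {M : Type*} [Monoid M] {s : ℕ} {S : Fin (s + 1) → Set M}
    (hS : ∀ a : M, ∀ x ∈ S 0, a * x ∈ S 0) (a : M) :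
    ∀ x ∈ (List.ofFn S).prod, a * x ∈ (List.ofFn S).prod := by
  rw [List.ofFn_succ, List.prod_cons]
  rintro _ ⟨x, hx, y, hy, rfl⟩
  exact ⟨a * x, hS a x hx, y, hy, mul_assoc a x y⟩

variable {k Γ : Type u} [CommRing k] [Ring Γ] [Algebra k Γ]

theorem radSet_subset (B : Subalgebra k Γ) : radSet B ⊆ B := by
  rintro _ ⟨x, -, rfl⟩
  exact x.2

theorem prod_radSet_subset {s : ℕ} (A' : Fin (s + 1) → Subalgebra k Γ)
    (hrad : ∀ j : Fin s, ∀ x ∈ radSet (A' j.castSucc), ∀ a ∈ A' j.succ,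
      a * x ∈ radSet (A' j.castSucc)) :
    (List.ofFn fun j : Fin s => radSet (A' j.rev.castSucc)).prod ⊆ A' 0 := by
  induction s with
  | zero => simp [Set.one_subset]
  | succ s ih =>
    rw [List.ofFn_succ_last, List.prod_append, List.prod_singleton, Fin.rev_last]
    simp only [Fin.rev_castSucc, ← Fin.succ_castSucc]
    rintro _ ⟨a, ha, x, hx, rfl⟩
    exact radSet_subset _ (hrad 0 x hx a (ih (fun j => A' j.succ) (fun j => hrad j.succ) ha))

theorem statement3_general (s : ℕ) (hs : 0 < s)
    (A' : Fin (s + 1) → Subalgebra k Γ) [IsArtinianRing (A' 0)] [Module.Finite (A' 0) Γ]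
    (htop : A' (Fin.last s) = ⊤)
    (hrad : ∀ j : Fin s, ∀ x ∈ radSet (A' j.castSucc), ∀ a ∈ A' j.succ,
      a * x ∈ radSet (A' j.castSucc))
    (h1 : OneSyzygyFinite Γ)
    (hq : SyzygyFiniteClass (A' 0) (fun X => Module.Finite (A' 0) X ∧
      ∀ x : Fin s → Γ, (∀ j : Fin s, x j ∈ radSet (A' j.castSucc)) →
        ∀ (hm : (List.ofFn fun j : Fin s => x j.rev).prod ∈ A' 0) (v : X),
          (⟨(List.ofFn fun j : Fin s => x j.rev).prod, hm⟩ : A' 0) • v = 0)) :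
    FinFinDim (A' 0) := by
  obtain ⟨s, rfl⟩ := Nat.exists_eq_succ_of_ne_zero hs.ne'
  refine finFinDim_of_subset (prod_radSet_subset A' hrad)
    (mul_mem_prod_ofFn fun a x hx => hrad _ x hx a ?_) h1 ?_
  · rw [Fin.rev_zero, Fin.succ_last, htop]
    trivial
  · obtain ⟨m, N, hN, h⟩ := hq
    refine ⟨m, N, hN, fun X ⟨hfin, hX⟩ => h X ⟨hfin, fun x hx _ => hX _ ?_⟩⟩
    exact Set.mem_prod_list_ofFn.2 ⟨fun j => ⟨x j.rev, hx j.rev⟩, rfl⟩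

end Chains

/-- Chain of subalgebras `B = A₀ ⊆ ⋯ ⊆ A_s = A` with `rad (A_{i-1})` a left
ideal of `A_i`.  If `A` is 1-syzygy-finite and `B/(rad (A_{s-1}) ⋯ rad (A₀))` is
`B`-syzygy-finite, then `fin.dim B < ∞`. -/
theorem statement3 (s : ℕ) (hs : 0 < s)
    (A' : Fin (s + 1) → Subalgebra R A)
    (hchain : ∀ j : Fin s, A' j.castSucc ≤ A' j.succ)
    (htop : A' (Fin.last s) = ⊤)
    (hrad : ∀ j : Fin s, ∀ x ∈ radSet (A' j.castSucc), ∀ a ∈ A' j.succ,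
      a * x ∈ radSet (A' j.castSucc))
    (h1 : OneSyzygyFinite A)
    (hq : SyzygyFiniteClass ↥(A' 0) (fun X => Module.Finite ↥(A' 0) X ∧
      ∀ x : Fin s → A, (∀ j : Fin s, x j ∈ radSet (A' j.castSucc)) →
        ∀ (hm : (List.ofFn fun j : Fin s => x j.rev).prod ∈ A' 0) (v : X),
          (⟨(List.ofFn fun j : Fin s => x j.rev).prod, hm⟩ : ↥(A' 0)) • v = 0)) :
    FinFinDim ↥(A' 0) := by
  have : IsArtinianRing (A' 0) :=
    isArtinian_of_tower R (inferInstanceAs (IsArtinian R (Subalgebra.toSubmodule (A' 0))))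
  have : Module.Finite (A' 0) A := .of_restrictScalars_finite R (A' 0) A
  exact statement3_general s hs A' htop hrad h1 hq
end
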